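/- Let M be a nonzero TS-submodule of C_b^∞(k^×) of finite length. Then for every smooth character χ of k^× and every f ∈ M, the zeta integral Z(f,χ,s) = ∫_{k^×} f(x)χ(x)|x|^s d^×x converges for Re(s) sufficiently large, and the quotient Z(f,χ,s)/L(χ⊗M,s) extends to an entire function of s ∈ ℂ. -/

import Mathlib

noncomputable section

open scoped Classical

namespace PSW

/-! ### The affine group `λ.b : x ↦ λ·x + b` over a field `K`. -/

@[ext]
structure Aff (K : Type*) [Field K] where
  t : Kˣ
  s : K

namespace Aff

variable {K : Type*} [Field K]

instance : Mul (Aff K) := ⟨fun g h => ⟨g.t * h.t, g.s + (g.t : K) * h.s⟩⟩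
instance : One (Aff K) := ⟨⟨1, 0⟩⟩
instance : Inv (Aff K) := ⟨fun g => ⟨g.t⁻¹, -(((g.t⁻¹ : Kˣ) : K) * g.s)⟩⟩

@[simp] lemma mul_t (g h : Aff K) : (g * h).t = g.t * h.t := rfl
@[simp] lemma mul_s (g h : Aff K) : (g * h).s = g.s + (g.t : K) * h.s := rfl
@[simp] lemma one_t : (1 : Aff K).t = 1 := rfl
@[simp] lemma one_s : (1 : Aff K).s = 0 := rfl
@[simp] lemma inv_t (g : Aff K) : (g⁻¹).t = g.t⁻¹ := rfl
@[simp] lemma inv_s (g : Aff K) : (g⁻¹).s = -(((g.t⁻¹ : Kˣ) : K) * g.s) := rfl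

instance : Group (Aff K) where
  mul_assoc a b c := by
    ext
    · simp [mul_assoc]
    · simp only [mul_s, mul_t, Units.val_mul]; ring
  one_mul a := by ext <;> simp
  mul_one a := by ext <;> simp
  inv_mul_cancel a := by
    ext
    · simp
    · simp

/-- The element `x_λ` of the group `TS`. -/
def xT (u : Kˣ) : Aff K := ⟨u, 0⟩

/-- The element `s_b` of the group `TS`. -/
def sS (b : K) : Aff K := ⟨1, b⟩

@[simp] lemma xT_t (u : Kˣ) : (xT u : Aff K).t = u := rfl
@[simp] lemma xT_s (u : Kˣ) : (xT u : Aff K).s = 0 := rfl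
@[simp] lemma sS_t (b : K) : (sS b : Aff K).t = 1 := rfl
@[simp] lemma sS_s (b : K) : (sS b : Aff K).s = b := rfl

/-- `T ≅ k^×` as a subgroup of `TS`. -/
def xTHom : Kˣ →* Aff K where
  toFun := xT
  map_one' := rfl
  map_mul' u v := by ext <;> simp [xT]

@[simp] lemma xTHom_apply (u : Kˣ) : (xTHom u : Aff K) = xT u := rfl

lemma mul_sS (g : Aff K) (b : K) : g * sS b = sS ((g.t : K) * b) * g := by
  ext
  · simp
  · simp [add_comm]

lemma sS_mul (b : K) (g : Aff K) : sS b * g = g * sS (((g.t⁻¹ : Kˣ) : K) * b) := by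
  ext
  · simp
  · simp [Units.mul_inv_cancel_left, add_comm]

lemma aff_decomp (g : Aff K) : g = xT g.t * sS (((g.t⁻¹ : Kˣ) : K) * g.s) := by
  ext
  · simp
  · simp [Units.mul_inv_cancel_left]

instance [TopologicalSpace K] : TopologicalSpace (Aff K) :=
  TopologicalSpace.induced (fun g : Aff K => ((g.t, g.s) : Kˣ × K)) inferInstance

end Aff

/-! ### Generalities on representations of a monoid on complex vector spaces. -/

namespace GRep

variable {G : Type*} [Monoid G]

section MonoidModules

variable {V W : Type*} [AddCommMonoid V] [Module ℂ V] [AddCommMonoid W] [Module ℂ W]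

/-- A submodule invariant under the representation. -/
def Invariant (ρ : Representation ℂ G V) (U : Submodule ℂ V) : Prop :=
  ∀ (g : G) (v : V), v ∈ U → ρ g v ∈ U

/-- Equivariance of a linear map with respect to two representations. -/
def Equivariant (ρ : Representation ℂ G V) (σ : Representation ℂ G W) (f : V →ₗ[ℂ] W) : Prop :=
  ∀ (g : G) (v : V), f (ρ g v) = σ g (f v)

/-- Isomorphism of representations. -/
def Iso (ρ : Representation ℂ G V) (σ : Representation ℂ G W) : Prop :=
  ∃ e : V ≃ₗ[ℂ] W, ∀ (g : G) (v : V), e (ρ g v) = σ g (e v)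

/-- Irreducibility. -/
def Irred (ρ : Representation ℂ G V) : Prop :=
  Nontrivial V ∧ ∀ U : Submodule ℂ V, Invariant ρ U → U = ⊥ ∨ U = ⊤

/-- Subrepresentation on an invariant submodule. -/
def sub (ρ : Representation ℂ G V) {U : Submodule ℂ V} (hU : Invariant ρ U) :
    Representation ℂ G ↥U where
  toFun g := (ρ g).restrict fun v hv => hU g v hv
  map_one' := by
    apply LinearMap.ext; intro v; apply Subtype.ext
    simp [LinearMap.restrict_apply]
  map_mul' g h := by
    apply LinearMap.ext; intro v; apply Subtype.ext
    simp [LinearMap.restrict_apply]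

@[simp] lemma sub_apply (ρ : Representation ℂ G V) {U : Submodule ℂ V} (hU : Invariant ρ U)
    (g : G) (v : ↥U) : ((sub ρ hU g v : ↥U) : V) = ρ g (v : V) := rfl

lemma ker_invariant (ρ : Representation ℂ G V) (σ : Representation ℂ G W)
    (f : V →ₗ[ℂ] W) (hf : Equivariant ρ σ f) : Invariant ρ (LinearMap.ker f) := by
  intro g v hv
  rw [LinearMap.mem_ker] at hv ⊢
  rw [hf g v, hv, map_zero]

lemma range_invariant (ρ : Representation ℂ G V) (σ : Representation ℂ G W)
    (f : V →ₗ[ℂ] W) (hf : Equivariant ρ σ f) : Invariant σ (LinearMap.range f) := by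
  rintro g w ⟨v, rfl⟩
  exact ⟨ρ g v, hf g v⟩

lemma map_invariant (ρ : Representation ℂ G V) (σ : Representation ℂ G W)
    (f : V →ₗ[ℂ] W) (hf : Equivariant ρ σ f) (U : Submodule ℂ V) (hU : Invariant ρ U) :
    Invariant σ (U.map f) := by
  rintro g w ⟨v, hv, rfl⟩
  exact ⟨ρ g v, hU g v hv, hf g v⟩

end MonoidModules

section GroupModules

variable {V W : Type*} [AddCommGroup V] [Module ℂ V] [AddCommGroup W] [Module ℂ W]

/-- Quotient representation. -/
def quot (ρ : Representation ℂ G V) (U : Submodule ℂ V) (hU : Invariant ρ U) :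
    Representation ℂ G (V ⧸ U) where
  toFun g := U.mapQ U (ρ g) fun v hv => hU g v hv
  map_one' := by
    apply LinearMap.ext; intro x
    obtain ⟨v, rfl⟩ := Submodule.Quotient.mk_surjective U x
    simp [Submodule.mapQ_apply]
  map_mul' g h := by
    apply LinearMap.ext; intro x
    obtain ⟨v, rfl⟩ := Submodule.Quotient.mk_surjective U x
    simp [Submodule.mapQ_apply]

@[simp] lemma quot_apply (ρ : Representation ℂ G V) (U : Submodule ℂ V) (hU : Invariant ρ U)
    (g : G) (v : V) :
    quot ρ U hU g (Submodule.Quotient.mk v) = Submodule.Quotient.mk (ρ g v) := rfl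

/-- Subquotient representation on `B/A`. -/
def subquot (ρ : Representation ℂ G V) {A B : Submodule ℂ V}
    (hA : Invariant ρ A) (hB : Invariant ρ B) :
    Representation ℂ G (↥B ⧸ A.comap B.subtype) :=
  quot (sub ρ hB) (A.comap B.subtype) fun g v hv => hA g v.1 hv

lemma mkQ_equivariant (ρ : Representation ℂ G V) (U : Submodule ℂ V) (hU : Invariant ρ U) :
    Equivariant ρ (quot ρ U hU) U.mkQ := by
  intro g v
  show Submodule.Quotient.mk (ρ g v) = quot ρ U hU g (Submodule.Quotient.mk v)
  rw [quot_apply]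

end GroupModules

end GRep

/-! ### TS-modules: representations of the affine group. -/

/-- A `TS`-module structure on `V` is a representation of the group `TS ≅ Gl_a(1)`. -/
abbrev Rep (K : Type*) [Field K] (V : Type*) [AddCommGroup V] [Module ℂ V] :=
  Representation ℂ (Aff K) V

section RepDefs

open Aff

variable {K : Type*} [Field K]
variable {V W : Type*} [AddCommGroup V] [Module ℂ V] [AddCommGroup W] [Module ℂ W]

/-- Smoothness: every vector has open stabilizer. -/
def IsSmoothRep [TopologicalSpace K] (ρ : Rep K V) : Prop :=
  ∀ v : V, IsOpen {g : Aff K | ρ g v = v}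

/-- Smoothness of a `T`-module, i.e. of a representation of `T ≅ k^×`. -/
def TIsSmooth {X : Type*} [AddCommMonoid X] [Module ℂ X] [TopologicalSpace K]
    (τ : Representation ℂ Kˣ X) : Prop :=
  ∀ x : X, IsOpen {u : Kˣ | τ u x = x}

/-- Smooth character of `T ≅ k^×` (open kernel, equivalently locally constant). -/
def SmoothMulChar [TopologicalSpace K] (χ : Kˣ →* ℂˣ) : Prop :=
  IsOpen {u : Kˣ | χ u = 1}

/-- The space `V^S` of `S`-invariants. -/
def sInv (ρ : Rep K V) : Submodule ℂ V where
  carrier := {v | ∀ b : K, ρ (sS b) v = v}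
  zero_mem' := fun b => map_zero _
  add_mem' {a b} ha hb := fun c => by rw [map_add, ha c, hb c]
  smul_mem' c v hv := fun b => by rw [map_smul, hv b]

@[simp] lemma mem_sInv (ρ : Rep K V) (v : V) :
    v ∈ sInv ρ ↔ ∀ b : K, ρ (sS b) v = v := Iff.rfl

/-- The `χ`-eigenspace `X^{T,χ}` of a `T`-module. -/
def tEigenT {X : Type*} [AddCommMonoid X] [Module ℂ X]
    (τ : Representation ℂ Kˣ X) (χ : Kˣ →* ℂˣ) : Submodule ℂ X where
  carrier := {x | ∀ u : Kˣ, τ u x = (χ u : ℂ) • x}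
  zero_mem' := fun u => by simp
  add_mem' {a b} ha hb := fun u => by rw [map_add, ha u, hb u, smul_add]
  smul_mem' c x hx := fun u => by rw [map_smul, hx u]; exact smul_comm c ((χ u : ℂ)) x

@[simp] lemma mem_tEigenT {X : Type*} [AddCommMonoid X] [Module ℂ X]
    (τ : Representation ℂ Kˣ X) (χ : Kˣ →* ℂˣ) (x : X) :
    x ∈ tEigenT τ χ ↔ ∀ u : Kˣ, τ u x = (χ u : ℂ) • x := Iff.rfl

/-- The `χ`-eigenspace `V^{T,χ}` of a `TS`-module. -/
def tEigen (ρ : Rep K V) (χ : Kˣ →* ℂˣ) : Submodule ℂ V := tEigenT (ρ.comp xTHom) χ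

/-- The kernel of the projection to the `S`-coinvariants `V_S`. -/
def sCoinvKer (ρ : Rep K V) : Submodule ℂ V :=
  Submodule.span ℂ {w : V | ∃ (b : K) (v : V), w = ρ (sS b) v - v}

/-- The kernel of the projection to the twisted coinvariants `V_{S,ψ'}`. -/
def sTwistKer (ρ : Rep K V) (ψ' : AddChar K ℂ) : Submodule ℂ V :=
  Submodule.span ℂ {w : V | ∃ (b : K) (v : V), w = ρ (sS b) v - ψ' b • v}

/-- The kernel of the projection to the `χ`-coinvariants `X_{T,χ}` of a `T`-module. -/
def tTwistKerT {X : Type*} [AddCommGroup X] [Module ℂ X]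
    (τ : Representation ℂ Kˣ X) (χ : Kˣ →* ℂˣ) : Submodule ℂ X :=
  Submodule.span ℂ {w : X | ∃ (u : Kˣ) (x : X), w = τ u x - (χ u : ℂ) • x}

/-- The kernel of the projection to the `χ`-coinvariants `V_{T,χ}` of a `TS`-module. -/
def tTwistKer (ρ : Rep K V) (χ : Kˣ →* ℂˣ) : Submodule ℂ V := tTwistKerT (ρ.comp xTHom) χ

lemma sCoinvKer_invariant (ρ : Rep K V) : GRep.Invariant ρ (sCoinvKer ρ) := by
  intro g v hv
  have h : sCoinvKer ρ ≤ Submodule.comap (ρ g) (sCoinvKer ρ) := by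
    refine Submodule.span_le.2 ?_
    rintro w ⟨b, v', rfl⟩
    simp only [SetLike.mem_coe, Submodule.mem_comap, map_sub]
    have h1 : ρ g (ρ (sS b) v') = ρ (sS ((g.t : K) * b)) (ρ g v') := by
      rw [← Module.End.mul_apply, ← map_mul, mul_sS, map_mul, Module.End.mul_apply]
    rw [h1]
    exact Submodule.subset_span ⟨(g.t : K) * b, ρ g v', rfl⟩
  exact h hv

lemma sInv_invariant (ρ : Rep K V) : GRep.Invariant ρ (sInv ρ) := by
  intro g v hv
  rw [mem_sInv] at hv ⊢
  intro b
  have h1 : ρ (sS b) (ρ g v) = ρ g (ρ (sS (((g.t⁻¹ : Kˣ) : K) * b)) v) := by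
    rw [← Module.End.mul_apply, ← map_mul, sS_mul, map_mul, Module.End.mul_apply]
  rw [h1, hv _]

/-- The `S`-coinvariants `π₀(V) = V_S` as a `TS`-module (`S` acting trivially). -/
def piZeroRep (ρ : Rep K V) : Rep K (V ⧸ sCoinvKer ρ) :=
  GRep.quot ρ (sCoinvKer ρ) (sCoinvKer_invariant ρ)

/-- The `S`-coinvariants `π₀(V) = V_S` as a `T`-module. -/
def piZeroT (ρ : Rep K V) : Representation ℂ Kˣ (V ⧸ sCoinvKer ρ) :=
  (piZeroRep ρ).comp xTHom

/-- The `T`-module structure on `κ(V) = V^S`. -/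
def sInvT (ρ : Rep K V) : Representation ℂ Kˣ ↥(sInv ρ) :=
  (GRep.sub ρ (sInv_invariant ρ)).comp xTHom

/-- A `TS`-module is perfect if all its eigenspaces `V^{T,χ}` for smooth `χ` vanish. -/
def Perfect [TopologicalSpace K] (ρ : Rep K V) : Prop :=
  ∀ χ : Kˣ →* ℂˣ, SmoothMulChar χ → tEigen ρ χ = ⊥

/-- A finite-dimensional `T`-module is cyclic if each generalized eigenspace is a single
Jordan block; equivalently all eigenspaces `X^{T,χ}` have dimension at most one. -/
def TCyclic {X : Type*} [AddCommGroup X] [Module ℂ X]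
    (τ : Representation ℂ Kˣ X) : Prop :=
  ∀ χ : Kˣ →* ℂˣ, Module.finrank ℂ ↥(tEigenT τ χ) ≤ 1

lemma sCoinvKer_le_comap (ρ : Rep K V) (σ : Rep K W)
    (f : V →ₗ[ℂ] W) (hf : GRep.Equivariant ρ σ f) :
    sCoinvKer ρ ≤ (sCoinvKer σ).comap f := by
  refine Submodule.span_le.2 ?_
  rintro w ⟨b, v, rfl⟩
  simp only [SetLike.mem_coe, Submodule.mem_comap, map_sub]
  rw [hf]
  exact Submodule.subset_span ⟨b, f v, rfl⟩

/-- The map induced by an equivariant map on the `S`-coinvariants `π₀`. -/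
def piZeroMap (ρ : Rep K V) (σ : Rep K W) (f : V →ₗ[ℂ] W) (hf : GRep.Equivariant ρ σ f) :
    (V ⧸ sCoinvKer ρ) →ₗ[ℂ] (W ⧸ sCoinvKer σ) :=
  Submodule.mapQ _ _ f (sCoinvKer_le_comap ρ σ f hf)

lemma piZeroMap_equivariant (ρ : Rep K V) (σ : Rep K W) (f : V →ₗ[ℂ] W)
    (hf : GRep.Equivariant ρ σ f) :
    GRep.Equivariant (piZeroRep ρ) (piZeroRep σ) (piZeroMap ρ σ f hf) := by
  intro g x
  obtain ⟨v, rfl⟩ := Submodule.Quotient.mk_surjective _ x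
  show piZeroMap ρ σ f hf (piZeroRep ρ g (Submodule.Quotient.mk v))
      = piZeroRep σ g (piZeroMap ρ σ f hf (Submodule.Quotient.mk v))
  rw [show piZeroRep ρ g (Submodule.Quotient.mk v) = Submodule.Quotient.mk (ρ g v) from rfl]
  rw [show piZeroMap ρ σ f hf (Submodule.Quotient.mk v) = Submodule.Quotient.mk (f v) from rfl]
  rw [show piZeroMap ρ σ f hf (Submodule.Quotient.mk (ρ g v))
      = Submodule.Quotient.mk (f (ρ g v)) from rfl]
  rw [show piZeroRep σ g (Submodule.Quotient.mk (f v)) = Submodule.Quotient.mk (σ g (f v)) from rfl]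
  rw [hf]

lemma kappaImg_invariant (ρ : Rep K V) :
    GRep.Invariant (piZeroT ρ) ((sInv ρ).map (sCoinvKer ρ).mkQ) := by
  rintro u w ⟨v, hv, rfl⟩
  refine ⟨ρ (xT u) v, sInv_invariant ρ (xT u) v hv, ?_⟩
  rfl

end RepDefs

/-! ### Composition series and degree. -/

/-- A composition series for a `TS`-module, witnessing finite length: a maximal chain of
invariant submodules (the subquotients are then irreducible). -/
structure CompSeries {K : Type*} [Field K] {V : Type*} [AddCommGroup V] [Module ℂ V]
    (ρ : Rep K V) where
  n : ℕ
  W : ℕ → Submodule ℂ V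
  bot : W 0 = ⊥
  top : W n = ⊤
  inv : ∀ i, GRep.Invariant ρ (W i)
  lt : ∀ i < n, W i < W (i + 1)
  maximal : ∀ i < n, ∀ C : Submodule ℂ V, GRep.Invariant ρ C → W i ≤ C → C ≤ W (i + 1) →
    C = W i ∨ C = W (i + 1)

/-- The number of Jordan–Hölder constituents of a composition series isomorphic to a given
representation `σ` (applied with `σ = 𝕊`, this is the degree). -/
def CompSeries.deg {K : Type*} [Field K] {V : Type*} [AddCommGroup V] [Module ℂ V]
    {ρ : Rep K V} (c : CompSeries ρ) {W₀ : Type*} [AddCommMonoid W₀] [Module ℂ W₀]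
    (σ : Representation ℂ (Aff K) W₀) : ℕ :=
  (Finset.univ.filter fun i : Fin c.n =>
    GRep.Iso (GRep.subquot ρ (c.inv i.1) (c.inv (i.1 + 1))) σ).card

/-! ### Fiber products of a `T`-module with a `TS`-module over a `T`-module. -/

section Fiber

open Aff

variable {K : Type*} [Field K]
variable {X Y E : Type*} [AddCommGroup X] [Module ℂ X] [AddCommGroup Y] [Module ℂ Y]
  [AddCommGroup E] [Module ℂ E]

/-- The product `TS`-module `X × E` where `S` acts trivially on the `T`-module `X`. -/
def prodRepTE (τ : Representation ℂ Kˣ X) (ρ : Rep K E) : Rep K (X × E) where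
  toFun g := (τ g.t).prodMap (ρ g)
  map_one' := by
    apply LinearMap.ext; rintro ⟨x, v⟩
    simp
  map_mul' g h := by
    apply LinearMap.ext; rintro ⟨x, v⟩
    simp [map_mul]

/-- The underlying space of the fiber product `𝔼[f] = X ×_Y E`. -/
def fiberKer (f : X →ₗ[ℂ] Y) (q : E →ₗ[ℂ] Y) : Submodule ℂ (X × E) :=
  LinearMap.ker (f.comp (LinearMap.fst ℂ X E) - q.comp (LinearMap.snd ℂ X E))

lemma mem_fiberKer (f : X →ₗ[ℂ] Y) (q : E →ₗ[ℂ] Y) (p : X × E) :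
    p ∈ fiberKer f q ↔ f p.1 = q p.2 := by
  simp [fiberKer, sub_eq_zero]

lemma fiber_invariant (τX : Representation ℂ Kˣ X) (ρE : Rep K E)
    (τY : Representation ℂ Kˣ Y) (f : X →ₗ[ℂ] Y) (q : E →ₗ[ℂ] Y)
    (hf : ∀ (u : Kˣ) (x : X), f (τX u x) = τY u (f x))
    (hq : sCoinvKer ρE ≤ LinearMap.ker q)
    (hqT : ∀ (u : Kˣ) (v : E), q (ρE (xT u) v) = τY u (q v)) :
    GRep.Invariant (prodRepTE τX ρE) (fiberKer f q) := by
  intro g p hp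
  rw [mem_fiberKer] at hp ⊢
  have hsb : q (ρE (sS (((g.t⁻¹ : Kˣ) : K) * g.s)) p.2) = q p.2 := by
    have h1 : ρE (sS (((g.t⁻¹ : Kˣ) : K) * g.s)) p.2 - p.2 ∈ sCoinvKer ρE :=
      Submodule.subset_span ⟨_, _, rfl⟩
    have h2 := hq h1
    rw [LinearMap.mem_ker, map_sub, sub_eq_zero] at h2
    exact h2
  have hdecomp : ρE g p.2 = ρE (xT g.t) (ρE (sS (((g.t⁻¹ : Kˣ) : K) * g.s)) p.2) := by
    conv_lhs => rw [aff_decomp g]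
    rw [map_mul, Module.End.mul_apply]
  have h1 : ((prodRepTE τX ρE) g p).1 = τX g.t p.1 := rfl
  have h2 : ((prodRepTE τX ρE) g p).2 = ρE g p.2 := rfl
  rw [h1, h2, hf, hp, hdecomp, hqT, hsb]

end Fiber

/-! ### Jordan blocks of finite-dimensional `T`-modules. -/

section Jordan

variable {K : Type*} [Field K]
variable {X : Type*} [AddCommGroup X] [Module ℂ X]

/-- A Jordan block of a `T`-module: a nonzero indecomposable invariant direct summand. -/
def IsJordanBlock (τ : Representation ℂ Kˣ X) (J : Submodule ℂ X) : Prop :=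
  J ≠ ⊥ ∧ GRep.Invariant τ J ∧ (∃ C : Submodule ℂ X, GRep.Invariant τ C ∧ IsCompl J C) ∧
    ∀ A B : Submodule ℂ X, GRep.Invariant τ A → GRep.Invariant τ B → A ≤ J → B ≤ J →
      A ⊓ B = ⊥ → A ⊔ B = J → A = ⊥ ∨ B = ⊥

end Jordan

/-! ### Invariants and coinvariants for a normal subgroup of an arbitrary group. -/

section Grp

variable {Γ : Type*} [Group Γ]
variable {V W : Type*} [AddCommGroup V] [Module ℂ V] [AddCommGroup W] [Module ℂ W]

/-- Invariants `V^N` under a subgroup `N`. -/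
def grpInv (ρ : Representation ℂ Γ V) (N : Subgroup Γ) : Submodule ℂ V where
  carrier := {v | ∀ n ∈ N, ρ n v = v}
  zero_mem' := fun n _ => map_zero _
  add_mem' {a b} ha hb := fun n hn => by rw [map_add, ha n hn, hb n hn]
  smul_mem' c v hv := fun n hn => by rw [map_smul, hv n hn]

@[simp] lemma mem_grpInv (ρ : Representation ℂ Γ V) (N : Subgroup Γ) (v : V) :
    v ∈ grpInv ρ N ↔ ∀ n ∈ N, ρ n v = v := Iff.rfl

/-- The kernel of the projection to the coinvariants `V_N` under a subgroup `N`. -/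
def grpCoinvKer (ρ : Representation ℂ Γ V) (N : Subgroup Γ) : Submodule ℂ V :=
  Submodule.span ℂ {w : V | ∃ n ∈ N, ∃ v : V, w = ρ n v - v}

lemma grpInv_invariant (ρ : Representation ℂ Γ V) (N : Subgroup Γ) [hN : N.Normal] :
    GRep.Invariant ρ (grpInv ρ N) := by
  intro γ v hv
  rw [mem_grpInv] at hv ⊢
  intro n hn
  have hmem : γ⁻¹ * n * γ ∈ N := by
    have := hN.conj_mem n hn γ⁻¹
    simpa using this
  have key : ρ n (ρ γ v) = ρ γ (ρ (γ⁻¹ * n * γ) v) := by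
    rw [← Module.End.mul_apply, ← map_mul, ← Module.End.mul_apply, ← map_mul]
    congr 1
    group
  rw [key, hv _ hmem]

lemma grpCoinvKer_invariant (ρ : Representation ℂ Γ V) (N : Subgroup Γ) [hN : N.Normal] :
    GRep.Invariant ρ (grpCoinvKer ρ N) := by
  intro γ v hv
  have h : grpCoinvKer ρ N ≤ Submodule.comap (ρ γ) (grpCoinvKer ρ N) := by
    refine Submodule.span_le.2 ?_
    rintro w ⟨n, hn, v', rfl⟩
    simp only [SetLike.mem_coe, Submodule.mem_comap, map_sub]
    have key : ρ γ (ρ n v') = ρ (γ * n * γ⁻¹) (ρ γ v') := by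
      rw [← Module.End.mul_apply, ← map_mul, ← Module.End.mul_apply, ← map_mul]
      congr 1
      group
    rw [key]
    exact Submodule.subset_span ⟨γ * n * γ⁻¹, hN.conj_mem n hn γ, ρ γ v', rfl⟩
  exact h hv

/-- The map induced on `N`-invariants by an equivariant map. -/
def grpInvRestrict (ρ : Representation ℂ Γ V) (σ : Representation ℂ Γ W) (N : Subgroup Γ)
    (f : V →ₗ[ℂ] W) (hf : GRep.Equivariant ρ σ f) : ↥(grpInv ρ N) →ₗ[ℂ] ↥(grpInv σ N) :=
  f.restrict (fun v hv => by
    rw [mem_grpInv] at hv ⊢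
    intro n hn
    rw [← hf n v, hv n hn])

lemma grpCoinvKer_le_comap (ρ : Representation ℂ Γ V) (σ : Representation ℂ Γ W) (N : Subgroup Γ)
    (f : V →ₗ[ℂ] W) (hf : GRep.Equivariant ρ σ f) :
    grpCoinvKer ρ N ≤ (grpCoinvKer σ N).comap f := by
  refine Submodule.span_le.2 ?_
  rintro w ⟨n, hn, v, rfl⟩
  simp only [SetLike.mem_coe, Submodule.mem_comap, map_sub]
  rw [hf]
  exact Submodule.subset_span ⟨n, hn, f v, rfl⟩

/-- The map induced on `N`-coinvariants by an equivariant map. -/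
def grpCoinvMap (ρ : Representation ℂ Γ V) (σ : Representation ℂ Γ W) (N : Subgroup Γ)
    (f : V →ₗ[ℂ] W) (hf : GRep.Equivariant ρ σ f) :
    (V ⧸ grpCoinvKer ρ N) →ₗ[ℂ] (W ⧸ grpCoinvKer σ N) :=
  Submodule.mapQ _ _ f (grpCoinvKer_le_comap ρ σ N f hf)

end Grp

/-! ### Tate L-factors of finite-dimensional `T`-modules. -/

section Lfactor

variable {K : Type*} [NontriviallyNormedField K]
variable {X : Type*} [AddCommGroup X] [Module ℂ X]

/-- The part of a `T`-module where the `χ`-twisted action is unramified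
(trivial on the norm-one units). -/
def unrPart (τ : Representation ℂ Kˣ X) (χ : Kˣ →* ℂˣ) : Submodule ℂ X where
  carrier := {x | ∀ u : Kˣ, ‖(u : K)‖ = 1 → (χ u : ℂ) • τ u x = x}
  zero_mem' := fun u _ => by simp
  add_mem' {a b} ha hb := fun u hu => by rw [map_add, smul_add, ha u hu, hb u hu]
  smul_mem' c x hx := fun u hu => by
    rw [map_smul, smul_comm, hx u hu]

lemma unrPart_stable (τ : Representation ℂ Kˣ X) (χ : Kˣ →* ℂˣ) (ϖ : Kˣ) :
    ∀ x ∈ unrPart τ χ, ((χ ϖ : ℂ) • τ ϖ) x ∈ unrPart τ χ := by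
  intro x hx u hu
  have comm : τ u (τ ϖ x) = τ ϖ (τ u x) := by
    rw [← Module.End.mul_apply, ← map_mul, mul_comm, map_mul, Module.End.mul_apply]
  calc (χ u : ℂ) • τ u (((χ ϖ : ℂ) • τ ϖ) x)
      = (χ ϖ : ℂ) • ((χ u : ℂ) • τ u (τ ϖ x)) := by
        rw [LinearMap.smul_apply, map_smul, smul_comm]
    _ = (χ ϖ : ℂ) • τ ϖ ((χ u : ℂ) • τ u x) := by rw [comm, map_smul]
    _ = ((χ ϖ : ℂ) • τ ϖ) x := by rw [hx u hu, LinearMap.smul_apply]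

/-- The twisted uniformizer action on the unramified part. -/
def twistOp (τ : Representation ℂ Kˣ X) (χ : Kˣ →* ℂˣ) (ϖ : Kˣ) :
    ↥(unrPart τ χ) →ₗ[ℂ] ↥(unrPart τ χ) :=
  LinearMap.restrict ((χ ϖ : ℂ) • τ ϖ) (unrPart_stable τ χ ϖ)

/-- The Tate `L`-factor `L(s, χ ⊗ X) = det(1 - q^{-s}·(χ·τ)(ϖ) | X^{unr,χ})⁻¹` of a
(finite-dimensional) `T`-module `X`, relative to a uniformizer `ϖ`. -/
def Lfactor (τ : Representation ℂ Kˣ X) (χ : Kˣ →* ℂˣ) (ϖ : Kˣ) (s : ℂ) : ℂ :=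
  (LinearMap.det (LinearMap.id - (‖(ϖ : K)‖ : ℂ) ^ s • twistOp τ χ ϖ))⁻¹

end Lfactor

/-! ### The concrete `TS`-modules `𝕊`, `C_c^∞(k)`, `C_b^∞(k^×)` and `𝔼[χ]`. -/

section Concrete

open Aff

variable (K : Type*) [NontriviallyNormedField K]

/-- The representation of `TS` on functions on `k^×`:
`(s_b g)(x) = ψ(bx) g(x)`, `(x_λ g)(x) = g(xλ)`. -/
def repCx (ψ : AddChar K ℂ) : Rep K (Kˣ → ℂ) where
  toFun g :=
    { toFun := fun f x => ψ (g.s * (x : K)) * f (x * g.t)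
      map_add' := fun f₁ f₂ => by funext x; simp [mul_add]
      map_smul' := fun c f => by
        funext x
        simp only [Pi.smul_apply, smul_eq_mul, RingHom.id_apply]
        ring }
  map_one' := by
    apply LinearMap.ext; intro f; funext x
    simp
  map_mul' g h := by
    apply LinearMap.ext; intro f; funext x
    show ψ ((g.s + (g.t : K) * h.s) * (x : K)) * f (x * (g.t * h.t))
        = ψ (g.s * (x : K)) * (ψ (h.s * ((x * g.t : Kˣ) : K)) * f (x * g.t * h.t))
    have harg : (g.s + (g.t : K) * h.s) * (x : K)
        = g.s * (x : K) + h.s * ((x * g.t : Kˣ) : K) := by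
      push_cast
      ring
    rw [harg, AddChar.map_add_eq_mul, ← mul_assoc x g.t h.t]
    ring

@[simp] lemma repCx_apply (ψ : AddChar K ℂ) (g : Aff K) (f : Kˣ → ℂ) (x : Kˣ) :
    repCx K ψ g f x = ψ (g.s * (x : K)) * f (x * g.t) := rfl

/-- The `χ`-twisted representation of `TS` on functions on `k`:
`(s_b g)(x) = ψ(bx) g(x)`, `(x_λ g)(x) = χ(λ) g(xλ)`.  (Take `χ = 1` for the
untwisted action on `C_c^∞(k)`; the module `𝔼[χ]` is `C_c^∞(k)` with the twisted action.) -/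
def repCc (ψ : AddChar K ℂ) (χ : Kˣ →* ℂˣ) : Rep K (K → ℂ) where
  toFun g :=
    { toFun := fun f x => (χ g.t : ℂ) * ψ (g.s * x) * f (x * (g.t : K))
      map_add' := fun f₁ f₂ => by funext x; simp [mul_add]
      map_smul' := fun c f => by
        funext x
        simp only [Pi.smul_apply, smul_eq_mul, RingHom.id_apply]
        ring }
  map_one' := by
    apply LinearMap.ext; intro f; funext x
    simp
  map_mul' g h := by
    apply LinearMap.ext; intro f; funext x
    show (χ (g.t * h.t) : ℂ) * ψ ((g.s + (g.t : K) * h.s) * x) * f (x * ((g.t * h.t : Kˣ) : K))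
        = (χ g.t : ℂ) * ψ (g.s * x) * ((χ h.t : ℂ) * ψ (h.s * (x * (g.t : K)))
            * f (x * (g.t : K) * (h.t : K)))
    have harg : (g.s + (g.t : K) * h.s) * x = g.s * x + h.s * (x * (g.t : K)) := by ring
    have harg2 : x * ((g.t * h.t : Kˣ) : K) = x * (g.t : K) * (h.t : K) := by
      push_cast
      ring
    rw [harg, harg2, AddChar.map_add_eq_mul, map_mul]
    push_cast
    ring

@[simp] lemma repCc_apply (ψ : AddChar K ℂ) (χ : Kˣ →* ℂˣ) (g : Aff K) (f : K → ℂ) (x : K) :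
    repCc K ψ χ g f x = (χ g.t : ℂ) * ψ (g.s * x) * f (x * (g.t : K)) := rfl

/-- The one-dimensional `TS`-module `ℂ_χ` on which `S` acts trivially and `x_λ` by `χ(λ)`. -/
def chiRep (χ : Kˣ →* ℂˣ) : Rep K ℂ where
  toFun g := (χ g.t : ℂ) • LinearMap.id
  map_one' := by
    apply LinearMap.ext; intro c
    simp
  map_mul' g h := by
    apply LinearMap.ext; intro c
    simp only [mul_t, map_mul, LinearMap.smul_apply, LinearMap.id_apply, Module.End.mul_apply,
      Units.val_mul, smul_eq_mul]
    ring

/-- `C_c^∞(k)`: locally constant, compactly supported functions on `k`. -/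
def CcK : Submodule ℂ (K → ℂ) where
  carrier := {f | IsLocallyConstant f ∧ HasCompactSupport f}
  zero_mem' := ⟨IsLocallyConstant.const 0, by
    rw [hasCompactSupport_def]
    simp⟩
  add_mem' {a b} ha hb := ⟨ha.1.comp₂ hb.1 (· + ·), ha.2.add hb.2⟩
  smul_mem' c f hf := by
    refine ⟨?_, hf.2.mono (Function.support_const_smul_subset c f)⟩
    exact hf.1.comp (fun z => c * z)

@[simp] lemma mem_CcK (f : K → ℂ) :
    f ∈ CcK K ↔ IsLocallyConstant f ∧ HasCompactSupport f := Iff.rfl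

/-- `𝕊 = C_c^∞(k^×)`: locally constant, compactly supported functions on `k^×`. -/
def SSx : Submodule ℂ (Kˣ → ℂ) where
  carrier := {f | IsLocallyConstant f ∧ HasCompactSupport f}
  zero_mem' := ⟨IsLocallyConstant.const 0, by
    rw [hasCompactSupport_def]
    simp⟩
  add_mem' {a b} ha hb := ⟨ha.1.comp₂ hb.1 (· + ·), ha.2.add hb.2⟩
  smul_mem' c f hf := by
    refine ⟨?_, hf.2.mono (Function.support_const_smul_subset c f)⟩
    exact hf.1.comp (fun z => c * z)

@[simp] lemma mem_SSx (f : Kˣ → ℂ) :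
    f ∈ SSx K ↔ IsLocallyConstant f ∧ HasCompactSupport f := Iff.rfl

/-- `C_b^∞(k^×)`: locally constant functions on `k^×` whose support has compact closure
in `k`. -/
def Cb : Submodule ℂ (Kˣ → ℂ) where
  carrier := {f | IsLocallyConstant f ∧
    IsCompact (closure (((↑) : Kˣ → K) '' Function.support f))}
  zero_mem' := ⟨IsLocallyConstant.const 0, by simp⟩
  add_mem' {a b} ha hb := by
    refine ⟨ha.1.comp₂ hb.1 (· + ·), ?_⟩
    refine IsCompact.of_isClosed_subset (ha.2.union hb.2) isClosed_closure ?_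
    refine closure_minimal ?_ (ha.2.isClosed.union hb.2.isClosed)
    refine (Set.image_mono (Function.support_add _ _)).trans ?_
    rw [Set.image_union]
    exact Set.union_subset_union subset_closure subset_closure
  smul_mem' c f hf := by
    refine ⟨hf.1.comp (fun z => c * z), ?_⟩
    refine IsCompact.of_isClosed_subset hf.2 isClosed_closure ?_
    refine closure_mono ?_
    exact Set.image_mono (Function.support_const_smul_subset c f)

@[simp] lemma mem_Cb (f : Kˣ → ℂ) :
    f ∈ Cb K ↔ IsLocallyConstant f ∧
      IsCompact (closure (((↑) : Kˣ → K) '' Function.support f)) := Iff.rfl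

variable {K}

lemma SSx_invariant (ψ : AddChar K ℂ) (hψlc : IsLocallyConstant (⇑ψ)) :
    GRep.Invariant (repCx K ψ) (SSx K) := by
  rintro g f hf
  rw [mem_SSx] at hf ⊢
  obtain ⟨hlc, hcs⟩ := hf
  have heq : repCx K ψ g f
      = (fun x : Kˣ => ψ (g.s * (x : K))) * (f ∘ (Homeomorph.mulRight g.t)) := rfl
  constructor
  · rw [heq]
    refine IsLocallyConstant.mul ?_ ?_
    · exact hψlc.comp_continuous (continuous_const.mul Units.continuous_val)
    · exact hlc.comp_continuous (Homeomorph.mulRight g.t).continuous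
  · rw [heq]
    exact (hcs.comp_homeomorph (Homeomorph.mulRight g.t)).mul_left

lemma CcK_invariant (ψ : AddChar K ℂ) (hψlc : IsLocallyConstant (⇑ψ)) (χ : Kˣ →* ℂˣ) :
    GRep.Invariant (repCc K ψ χ) (CcK K) := by
  rintro g f hf
  rw [mem_CcK] at hf ⊢
  obtain ⟨hlc, hcs⟩ := hf
  have hne : ((g.t : Kˣ) : K) ≠ 0 := g.t.ne_zero
  have heq : repCc K ψ χ g f
      = (fun x : K => (χ g.t : ℂ) * ψ (g.s * x)) * (f ∘ (Homeomorph.mulRight₀ (g.t : K) hne)) :=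
    rfl
  constructor
  · rw [heq]
    refine IsLocallyConstant.mul ?_ ?_
    · exact ((hψlc.comp_continuous (continuous_const.mul continuous_id)).comp
        (fun z => (χ g.t : ℂ) * z))
    · exact hlc.comp_continuous (Homeomorph.mulRight₀ (g.t : K) hne).continuous
  · rw [heq]
    exact (hcs.comp_homeomorph (Homeomorph.mulRight₀ (g.t : K) hne)).mul_left

/-- The `TS`-module `𝕊 = C_c^∞(k^×)`. -/
def SRep (ψ : AddChar K ℂ) (hψlc : IsLocallyConstant (⇑ψ)) : Rep K ↥(SSx K) :=
  GRep.sub (repCx K ψ) (SSx_invariant ψ hψlc)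

/-- The `TS`-module `𝔼[χ]`, i.e. `C_c^∞(k)` with the `χ`-twisted action. -/
def ERep (ψ : AddChar K ℂ) (hψlc : IsLocallyConstant (⇑ψ)) (χ : Kˣ →* ℂˣ) : Rep K ↥(CcK K) :=
  GRep.sub (repCc K ψ χ) (CcK_invariant ψ hψlc χ)

/-- The `TS`-module `𝕊^s`, a direct sum of `s` copies of `𝕊`. -/
def SRepPow (ψ : AddChar K ℂ) (hψlc : IsLocallyConstant (⇑ψ)) (s : ℕ) :
    Rep K (Fin s → ↥(SSx K)) where
  toFun g := LinearMap.pi fun i => (SRep ψ hψlc g).comp (LinearMap.proj i)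
  map_one' := by
    apply LinearMap.ext; intro v; funext i
    simp
  map_mul' g h := by
    apply LinearMap.ext; intro v; funext i
    simp [map_mul]

/-- The submodule `E` of `C_b^∞(k^×)` consisting of functions which are `χ`-eigenvectors
modulo `𝕊`; the quotient `E/𝕊` is the `χ`-eigenspace of `C_b^∞(k^×)/𝕊`. -/
def quotEigen (ψ : AddChar K ℂ) (χ : Kˣ →* ℂˣ) : Submodule ℂ (Kˣ → ℂ) where
  carrier := {f | f ∈ Cb K ∧ ∀ u : Kˣ, repCx K ψ (Aff.xT u) f - (χ u : ℂ) • f ∈ SSx K}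
  zero_mem' := ⟨(Cb K).zero_mem, fun u => by simpa using (SSx K).zero_mem⟩
  add_mem' {a b} ha hb := by
    refine ⟨(Cb K).add_mem ha.1 hb.1, fun u => ?_⟩
    rw [map_add, smul_add, add_sub_add_comm]
    exact (SSx K).add_mem (ha.2 u) (hb.2 u)
  smul_mem' c f hf := by
    refine ⟨(Cb K).smul_mem c hf.1, fun u => ?_⟩
    rw [map_smul, smul_comm, ← smul_sub]
    exact (SSx K).smul_mem c (hf.2 u)

/-- Evaluation at `0 ∈ k`, realizing the quotient map `𝔼[χ] → ℂ_χ` with kernel `𝕊`. -/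
def ev0 : ↥(CcK K) →ₗ[ℂ] ℂ where
  toFun f := (f : K → ℂ) 0
  map_add' f g := rfl
  map_smul' c f := rfl

end Concrete

/-! ### The diagonal torus in GL(2). -/

section GL2

variable {K : Type*} [Field K]

/-- The diagonal element `diag(a, b)` of `GL(2, K)`. -/
def diagGL (a b : Kˣ) : Matrix.GeneralLinearGroup (Fin 2) K where
  val := Matrix.diagonal ![(a : K), (b : K)]
  inv := Matrix.diagonal ![((a : K))⁻¹, ((b : K))⁻¹]
  val_inv := by
    ext i j
    fin_cases i <;> fin_cases j <;>
      simp [Matrix.mul_apply, Fin.sum_univ_two, Matrix.diagonal, Matrix.one_apply,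
        a.ne_zero, b.ne_zero]
  inv_val := by
    ext i j
    fin_cases i <;> fin_cases j <;>
      simp [Matrix.mul_apply, Fin.sum_univ_two, Matrix.diagonal, Matrix.one_apply,
        a.ne_zero, b.ne_zero]

end GL2

/-!
The coinvariants `π₀(M)` are the germs at `0` of the functions of `M`: a function whose germ
vanishes is supported in a compact subset of `kˣ`, and averaging it over finitely many
translations `s_b` kills it.

As a module over `ℂ[kˣ]`, `π₀(M)` has finite length. If it were infinite-dimensional, it would
contain a minimal infinite-dimensional submodule, on which `w - c` is zero or onto for all `w ∈ 𝔬ˣ`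
and `c ∈ ℂ`. Fourier analysis along the orbits of `𝔬ˣ` and Baire's theorem show that each `w ∈ 𝔬ˣ`
then acts on a generator with finite order, hence on the whole submodule by a scalar. This leaves
a module over the Laurent polynomials in `ϖ`, where a minimal infinite-dimensional one does not
exist. So `π₀(M)` is finite-dimensional.

By Cayley-Hamilton, the values of `f χ` at `y ϖⁿ` satisfy a linear recurrence for large `n`, hence
grow at most exponentially, and the zeta integral converges for `Re s` large. There it is the series
`∑ bₙ tⁿ`, where `bₙ` is the integral of `f χ` over `ϖⁿ 𝔬ˣ` and `t = |ϖ|ˢ`. Since `𝔬ˣ` acts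
semisimply, only the part of `χ ⊗ π₀(M)` fixed by `𝔬ˣ` contributes to `bₙ` for large `n`. If `T` is
the action of `ϖ` on this part and `p` its characteristic polynomial, of degree `d`, then `bₙ`
satisfies the recurrence given by `p` for large `n`, so that `p(t⁻¹) ∑ bₙ tⁿ` is a Laurent
polynomial in `t`. Finally `tᵈ p(t⁻¹) = det (1 - t T)` is the inverse of the `L`-factor.
-/

section MinimalInfinite

open Polynomial

variable (k A V : Type*) [Field k] [CommRing A] [Algebra k A] [AddCommGroup V] [Module k V]
  [Module A V] [IsScalarTower k A V]

/-- An infinite-dimensional module all of whose proper submodules are finite-dimensional. -/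
structure IsMinimalInfinite : Prop where
  infinite : ¬ FiniteDimensional k V
  finite_of_ne_top : ∀ N : Submodule A V, N ≠ ⊤ → FiniteDimensional k N

variable {k A V}

lemma exists_isMinimalInfinite [IsArtinian A V] (h : ¬ FiniteDimensional k V) :
    ∃ Z : Submodule A V, IsMinimalInfinite k A Z := by
  obtain ⟨Z, hZ, hmin⟩ := WellFounded.has_min (wellFounded_lt (α := Submodule A V))
    {Z | ¬ FiniteDimensional k Z} ⟨⊤, fun h' => h <|
      ((Submodule.topEquiv (R := A) (M := V)).restrictScalars k).finiteDimensional⟩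
  refine ⟨Z, hZ, fun N hN => ?_⟩
  have hlt : N.map Z.subtype < Z := by
    simpa using Submodule.map_strictMono_of_injective Z.injective_subtype hN.lt_top
  have : FiniteDimensional k (N.map Z.subtype) := not_not.1 (hmin _ · hlt)
  exact ((Submodule.equivMapOfInjective Z.subtype Z.injective_subtype
    N).restrictScalars k).symm.finiteDimensional

namespace IsMinimalInfinite

lemma smul_eq_zero_or_surjective (h : IsMinimalInfinite k A V) (a : A) :
    (∀ x : V, a • x = 0) ∨ Function.Surjective (a • · : V → V) := by
  let φ : V →ₗ[A] V := LinearMap.lsmul A V a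
  by_cases hker : LinearMap.ker φ = ⊤
  · exact .inl fun x => LinearMap.congr_fun (LinearMap.ker_eq_top.1 hker) x
  have hrange : LinearMap.range φ = ⊤ := by
    by_contra hrange
    have : FiniteDimensional k (LinearMap.ker (φ.restrictScalars k)) := h.finite_of_ne_top _ hker
    have : FiniteDimensional k (LinearMap.range (φ.restrictScalars k)) :=
      h.finite_of_ne_top _ hrange
    have : FiniteDimensional k (V ⧸ LinearMap.ker (φ.restrictScalars k)) :=
      (φ.restrictScalars k).quotKerEquivRange.symm.finiteDimensional
    exact h.infinite (Module.Finite.of_submodule_quotient (LinearMap.ker (φ.restrictScalars k)))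
  exact .inr (LinearMap.range_eq_top.1 hrange)

lemma exists_span_singleton_eq_top [IsNoetherian A V] (h : IsMinimalInfinite k A V) :
    ∃ y : V, Submodule.span A {y} = ⊤ := by
  by_contra! hne
  obtain ⟨s, hs⟩ := IsNoetherian.noetherian (⊤ : Submodule A V)
  have hfin : ∀ y, FiniteDimensional k ((Submodule.span A {y}).restrictScalars k) :=
    fun y => h.finite_of_ne_top _ (hne y)
  have hsup : (⨆ y ∈ s, (Submodule.span A {y}).restrictScalars k) = ⊤ := by
    rw [← Submodule.restrictScalars_top k A V, ← hs, Submodule.span_eq_iSup_of_singleton_spans]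
    simp
  have := Submodule.finite_finset_sup s fun y => (Submodule.span A {y}).restrictScalars k
  rw [Finset.sup_eq_iSup, hsup] at this
  exact h.infinite (Module.finite_def.2 (Module.Finite.iff_fg.1 this))

lemma exists_smul_eq_of_aeval_smul_eq_zero [IsAlgClosed k] (h : IsMinimalInfinite k A V)
    (a : A) {p : k[X]} (hp : p ≠ 0) (hpa : ∀ x : V, aeval a p • x = 0) :
    ∃ c : k, ∀ x : V, a • x = c • x := by
  by_contra! hscalar
  have hroot (c : k) : Function.Surjective ((aeval a (X - C c) : A) • · : V → V) := by
    refine (h.smul_eq_zero_or_surjective _).resolve_left fun h0 => ?_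
    obtain ⟨x, hx⟩ := hscalar c
    exact hx (sub_eq_zero.1 (by simpa [sub_smul] using h0 x))
  have hprod (s : Multiset k) :
      Function.Surjective ((aeval a (s.map fun c => X - C c).prod : A) • · : V → V) := by
    induction s using Multiset.induction_on with
    | empty => exact fun x => ⟨x, by simp⟩
    | cons c s ih => simpa [mul_smul] using! (hroot c).comp ih
  have hV (x : V) : x = 0 := by
    obtain ⟨y, rfl⟩ := hprod p.roots x
    have h0 := hpa y
    rw [(IsAlgClosed.splits p).eq_prod_roots, map_mul, aeval_C, mul_smul, algebraMap_smul] at h0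
    exact (smul_eq_zero.1 h0).resolve_left (leadingCoeff_ne_zero.2 hp)
  have : Subsingleton V := ⟨fun x y => (hV x).trans (hV y).symm⟩
  exact h.infinite inferInstance

lemma exists_smul_eq_of_laurent [IsAlgClosed k] [IsNoetherian A V] (h : IsMinimalInfinite k A V)
    (ϖ : A) (hA : ∀ a : A, ∃ (n : ℕ) (p : k[X]), ∀ x : V, (a * ϖ ^ n) • x = aeval ϖ p • x) :
    ∃ c : k, ∀ x : V, ϖ • x = c • x := by
  obtain ⟨y, hy⟩ := h.exists_span_singleton_eq_top
  have hcyclic (x : V) : ∃ a : A, a • y = x :=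
    Submodule.mem_span_singleton.1 (hy ▸ Submodule.mem_top)
  rcases h.smul_eq_zero_or_surjective (ϖ - 1) with h0 | hsurj
  · exact ⟨1, fun x => by simpa [sub_smul, sub_eq_zero] using h0 x⟩
  obtain ⟨w, hw⟩ := hsurj y
  obtain ⟨a, rfl⟩ := hcyclic w
  obtain ⟨n, p, hp⟩ := hA a
  let q : k[X] := X ^ n - (X - 1) * p
  have hqy : aeval ϖ q • y = 0 := by
    have hy' : ϖ ^ n • y = ((ϖ - 1) * aeval ϖ p) • y := by
      rw [mul_smul, ← hp y, smul_smul, ← mul_assoc, mul_comm _ (ϖ ^ n), mul_smul, mul_smul]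
      exact congrArg _ hw.symm
    simp [q, sub_smul, hy']
  have hq : q ≠ 0 := fun h0 => by simpa [q] using congrArg (eval 1) h0
  refine h.exists_smul_eq_of_aeval_smul_eq_zero ϖ hq fun x => ?_
  obtain ⟨b, rfl⟩ := hcyclic x
  rw [smul_comm, hqy, smul_zero]

/-- Over an algebraically closed field, a ring acting through the Laurent polynomials in one
element has no minimal infinite Noetherian module: it acts by scalars, so that a cyclic module is
a line. -/
lemma not_of_laurent [IsAlgClosed k] [IsNoetherian A V] {ϖ : A} (hϖ : IsUnit ϖ)
    (hA : ∀ a : A, ∃ (n : ℕ) (p : k[X]), ∀ x : V, (a * ϖ ^ n) • x = aeval ϖ p • x) :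
    ¬ IsMinimalInfinite k A V := by
  intro h
  obtain ⟨y, hy⟩ := h.exists_span_singleton_eq_top
  obtain ⟨c, hc⟩ := h.exists_smul_eq_of_laurent ϖ hA
  have hc0 : c ≠ 0 := by
    rintro rfl
    have : Subsingleton V :=
      ⟨fun x x' => hϖ.smul_left_cancel.1 (by rw [hc, hc, zero_smul, zero_smul])⟩
    exact h.infinite inferInstance
  have hpow (n : ℕ) (x : V) : ϖ ^ n • x = c ^ n • x := by
    induction n with
    | zero => simp
    | succ n ih => rw [pow_succ', mul_smul, ih, hc, smul_smul, pow_succ']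
  have hpoly (p : k[X]) (x : V) : aeval ϖ p • x = p.eval c • x := by
    induction p using Polynomial.induction_on' with
    | add p q hp hq => rw [map_add, add_smul, hp, hq, eval_add, add_smul]
    | monomial n r =>
      rw [aeval_monomial, mul_smul, algebraMap_smul, hpow, smul_smul, eval_monomial]
  have hline : Submodule.span k {y} = ⊤ := by
    refine Submodule.eq_top_iff'.2 fun x => ?_
    obtain ⟨a, rfl⟩ : ∃ a : A, a • y = x := Submodule.mem_span_singleton.1 (hy ▸ trivial)
    obtain ⟨n, p, hp⟩ := hA a
    refine Submodule.mem_span_singleton.2 ⟨(c ^ n)⁻¹ * p.eval c, ?_⟩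
    rw [mul_smul, ← hpoly, ← hp, mul_comm, mul_smul, hpow, inv_smul_smul₀ (pow_ne_zero n hc0)]
  exact h.infinite (Module.finite_def.2 (hline ▸ Submodule.fg_span_singleton y))

end IsMinimalInfinite

end MinimalInfinite

section GroupAlgebra

open Polynomial MonoidAlgebra

variable {k G V : Type*} [Field k] [CommGroup G] [AddCommGroup V] [Module k V]
  [Module (MonoidAlgebra k G) V] [IsScalarTower k (MonoidAlgebra k G) V]

lemma exists_mul_pow_smul_eq_aeval_smul {O : Set G} {ϖ : G}
    (hgen : ∀ g : G, ∃ n : ℤ, ∃ u ∈ O, g = ϖ ^ n * u)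
    (hscalar : ∀ u ∈ O, ∃ c : k, ∀ x : V, of k G u • x = c • x) (a : MonoidAlgebra k G) :
    ∃ (n : ℕ) (p : k[X]), ∀ x : V, (a * of k G ϖ ^ n) • x = aeval (of k G ϖ) p • x := by
  induction a using MonoidAlgebra.induction_linear with
  | zero => exact ⟨0, 0, fun x => by simp⟩
  | add a b ha hb =>
    obtain ⟨n, p, hp⟩ := ha
    obtain ⟨m, q, hq⟩ := hb
    refine ⟨n + m, p * X ^ m + q * X ^ n, fun x => ?_⟩
    have hsplit : (a + b) * of k G ϖ ^ (n + m) =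
        a * of k G ϖ ^ n * of k G ϖ ^ m + b * of k G ϖ ^ m * of k G ϖ ^ n := by ring
    rw [hsplit, add_smul, mul_smul, hp, mul_smul, hq, map_add, map_mul, map_mul, map_pow, map_pow,
      aeval_X, add_smul, mul_smul, mul_smul]
  | single g r =>
    obtain ⟨m, u, hu, rfl⟩ := hgen g
    obtain ⟨c, hc⟩ := hscalar u hu
    obtain ⟨j, hj⟩ := Int.eq_ofNat_of_zero_le (a := m + m.natAbs) (by omega)
    refine ⟨m.natAbs, C (r * c) * X ^ j, fun x => ?_⟩
    have hsingle : single (ϖ ^ m * u) r * of k G ϖ ^ m.natAbs =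
        algebraMap k _ r * of k G ϖ ^ j * of k G u := by
      rw [← map_pow, ← map_pow, mul_assoc, ← map_mul, of_apply, of_apply, single_mul_single,
        mul_one, ← zpow_natCast ϖ j, ← hj, zpow_add, zpow_natCast]
      simp [mul_right_comm]
    rw [hsingle, mul_smul, hc, smul_algebra_smul_comm]
    simp only [map_mul, map_pow, aeval_X, aeval_C, mul_smul, algebraMap_smul]
    rw [smul_comm c r]

/-- Inside a minimal infinite-dimensional submodule `Z`, generated by `y`, the operator `u - c`
is either zero or onto, which is the premise of `hpow` for `y`. -/
theorem finiteDimensional_of_forall_exists_pow_smul_eq [IsAlgClosed k]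
    [IsArtinian (MonoidAlgebra k G) V] [IsNoetherian (MonoidAlgebra k G) V] {O : Set G} {ϖ : G}
    (hgen : ∀ g : G, ∃ n : ℤ, ∃ u ∈ O, g = ϖ ^ n * u)
    (hpow : ∀ x : V, x ≠ 0 →
      (∀ u ∈ O, ∀ c : k, of k G u • x = c • x ∨
        ∃ a : MonoidAlgebra k G, x = of k G u • a • x - c • a • x) →
      ∀ u ∈ O, ∃ m, 0 < m ∧ of k G (u ^ m) • x = x) :
    FiniteDimensional k V := by
  by_contra hinf
  obtain ⟨Z, hZ⟩ := exists_isMinimalInfinite (A := MonoidAlgebra k G) hinf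
  obtain ⟨y, hy⟩ := hZ.exists_span_singleton_eq_top
  have hcyclic (z : Z) : ∃ a : MonoidAlgebra k G, a • y = z :=
    Submodule.mem_span_singleton.1 (hy ▸ Submodule.mem_top)
  have hy0 : y ≠ 0 := by
    rintro rfl
    have : Subsingleton Z := subsingleton_of_forall_eq 0 fun z => by
      obtain ⟨a, rfl⟩ := hcyclic z
      exact smul_zero a
    exact hZ.infinite inferInstance
  have hdich (u : G) (c : k) : of k G u • (y : V) = c • (y : V) ∨
      ∃ a : MonoidAlgebra k G, (y : V) = of k G u • a • (y : V) - c • a • (y : V) := by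
    rcases hZ.smul_eq_zero_or_surjective (of k G u - algebraMap k _ c) with h0 | hsurj
    · left
      simpa [sub_smul, sub_eq_zero, -of_apply, -coe_algebraMap] using congrArg Subtype.val (h0 y)
    · right
      obtain ⟨w, hw⟩ := hsurj y
      obtain ⟨a, rfl⟩ := hcyclic w
      exact ⟨a, by simpa [sub_smul, -of_apply, -coe_algebraMap] using! congrArg Subtype.val hw.symm⟩
  have hscalar (u : G) (hu : u ∈ O) : ∃ c : k, ∀ z : Z, of k G u • z = c • z := by
    obtain ⟨m, hm, hum⟩ := hpow y (by simpa using hy0) (fun u _ => hdich u) u hu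
    refine hZ.exists_smul_eq_of_aeval_smul_eq_zero (of k G u)
      (X_pow_sub_C_ne_zero hm (1 : k)) fun z => ?_
    obtain ⟨a, rfl⟩ := hcyclic z
    rw [smul_comm, map_sub, map_pow, aeval_X, aeval_C, map_one, sub_smul, one_smul, ← map_pow,
      Subtype.ext (show ((of k G (u ^ m) • y : Z) : V) = y from hum), sub_self, smul_zero]
  exact IsMinimalInfinite.not_of_laurent ((Group.isUnit ϖ).map (of k G))
    (exists_mul_pow_smul_eq_aeval_smul hgen hscalar) hZ

end GroupAlgebra

section FiniteLength

open Aff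

variable {K : Type*} [Field K] {V : Type*} [AddCommGroup V] [Module ℂ V] {ρ : Rep K V}

lemma CompSeries.isFiniteLength (c : CompSeries ρ) :
    IsFiniteLength (MonoidAlgebra ℂ (Aff K)) ρ.asModule := by
  let W (i : ℕ) : Subrepresentation ρ := ⟨c.W i, fun g v => c.inv i g v⟩
  have hcov (i : ℕ) (hi : i < c.n) : W i ⋖ W (i + 1) :=
    ⟨c.lt i hi, fun C h₁ h₂ => by
      rcases c.maximal i hi C.toSubmodule C.apply_mem_toSubmodule h₁.le h₂.le with h | h
      · exact h₁.ne' (Subrepresentation.toSubmodule_injective h)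
      · exact h₂.ne (Subrepresentation.toSubmodule_injective h)⟩
  let e := Subrepresentation.subrepresentationSubmoduleOrderIso (ρ := ρ)
  have hbot : W 0 = ⊥ := Subrepresentation.toSubmodule_injective c.bot
  have htop : W c.n = ⊤ := Subrepresentation.toSubmodule_injective c.top
  refine isFiniteLength_of_exists_compositionSeries
    ⟨⟨c.n, fun i => e (W i), fun i => (apply_covBy_apply_iff e).2 (hcov i i.2)⟩, ?_, ?_⟩
  · exact (congrArg e hbot).trans (map_bot e)
  · exact (congrArg e htop).trans (map_top e)

lemma mkQ_apply_eq_piZeroT (g : Aff K) (v : V) :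
    (sCoinvKer ρ).mkQ (ρ g v) = piZeroT ρ g.t ((sCoinvKer ρ).mkQ v) := by
  have hg : g = sS g.s * xT g.t := by ext <;> simp
  refine (Submodule.Quotient.eq _).2 (Submodule.subset_span ⟨g.s, ρ (xT g.t) v, ?_⟩)
  rw [← Module.End.mul_apply, ← map_mul, ← hg]
  rfl

/-- The submodules of `π₀(V)` pull back to the submodules of `V` that contain the kernel of the
projection. -/
def comapPiZero (N : Submodule (MonoidAlgebra ℂ Kˣ) (piZeroT ρ).asModule) :
    Submodule (MonoidAlgebra ℂ (Aff K)) ρ.asModule :=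
  let N' := Subrepresentation.ofSubmodule' N
  Subrepresentation.asSubmodule ⟨N'.toSubmodule.comap (sCoinvKer ρ).mkQ, fun g v hv => by
    rw [Submodule.mem_comap, mkQ_apply_eq_piZeroT]
    exact N'.apply_mem_toSubmodule g.t hv⟩

lemma comapPiZero_strictMono : StrictMono (comapPiZero (ρ := ρ)) :=
  Monotone.strictMono_of_injective (fun _ _ h v hv => h hv) fun N N' h => by
    ext x
    obtain ⟨v, rfl⟩ := Submodule.mkQ_surjective (sCoinvKer ρ) x
    exact SetLike.ext_iff.1 h v

lemma CompSeries.isArtinian_piZeroT (c : CompSeries ρ) :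
    IsArtinian (MonoidAlgebra ℂ Kˣ) (piZeroT ρ).asModule :=
  have := (isFiniteLength_iff_isNoetherian_isArtinian.1 c.isFiniteLength).2
  comapPiZero_strictMono.wellFoundedLT

lemma CompSeries.isNoetherian_piZeroT (c : CompSeries ρ) :
    IsNoetherian (MonoidAlgebra ℂ Kˣ) (piZeroT ρ).asModule :=
  have := (isFiniteLength_iff_isNoetherian_isArtinian.1 c.isFiniteLength).1
  isNoetherian_iff'.2 comapPiZero_strictMono.wellFoundedGT

end FiniteLength

section Topology

open Filter
open scoped Topology

lemma isOpen_setOf_forall_apply_mul_eq {G α : Type*} [TopologicalSpace G] [Mul G]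
    [ContinuousMul G] {f : G → α} (hf : IsLocallyConstant f) {C : Set G} (hC : IsCompact C)
    (v : G) : IsOpen {w | ∀ y ∈ C, f (y * w) = f (y * v)} := by
  refine isOpen_iff_eventually.2 fun w hw => ?_
  refine (hC.eventually_forall_of_forall_eventually (P := fun w' y => f (y * w') = f (y * w))
    fun y _ => ?_).mono fun w' h y hy => (h y hy).trans (hw y hy)
  have hcont : IsLocallyConstant fun z : G × G => f (z.2 * z.1) := hf.comp_continuous (by fun_prop)
  have hcont' : IsLocallyConstant fun z : G × G => f (z.2 * w) := hf.comp_continuous (by fun_prop)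
  filter_upwards [hcont.eventually_eq (w, y), hcont'.eventually_eq (w, y)] with z h h'
  exact h.trans h'.symm

lemma exists_pos_forall_mul_pow_mem {G : Type*} [CommGroup G] [TopologicalSpace G]
    [IsTopologicalGroup G] [CompactSpace G] [TotallyDisconnectedSpace G] (u v : G) {V : Set G}
    (hV : V ∈ 𝓝 v) : ∃ M, 0 < M ∧ ∀ j : ℕ, v * (u ^ M) ^ j ∈ V := by
  obtain ⟨U, hUV, hU, h1⟩ := mem_nhds_iff.1
    ((continuous_const_mul v).continuousAt.preimage_mem_nhds (by rwa [mul_one]) :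
      (v * ·) ⁻¹' V ∈ 𝓝 1)
  obtain ⟨N, hN⟩ := ProfiniteGrp.exist_openNormalSubgroup_sub_open_nhds_of_one hU h1
  have : N.toSubgroup.FiniteIndex := N.toOpenSubgroup.finiteIndex_of_finite_quotient
  exact ⟨N.toSubgroup.index, Nat.pos_of_ne_zero N.toSubgroup.index_ne_zero_of_finite,
    fun j => hUV (hN (pow_mem (N.toSubgroup.pow_index_mem u) j))⟩

variable (K : Type*) [NontriviallyNormedField K]

/-- The units of norm one, that is `𝔬ˣ` inside `kˣ`. -/
def unitSphere : Subgroup Kˣ := (Units.map (normHom : K →*₀ ℝ).toMonoidHom).ker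

/-- The neighbourhoods of `0 ∈ k` intersected with `kˣ`; two functions on `kˣ` have the same germ
at `0` when they are equal along this filter. -/
def atZero : Filter Kˣ := comap (fun x : Kˣ => (x : K)) (𝓝 0)

variable {K}

lemma mem_unitSphere {u : Kˣ} : u ∈ unitSphere K ↔ ‖(u : K)‖ = 1 := by
  simp [unitSphere, MonoidHom.mem_ker, Units.ext_iff]

lemma norm_mul_eq_of_mem_unitSphere {u : Kˣ} (hu : u ∈ unitSphere K) (x : Kˣ) :
    ‖((x * u : Kˣ) : K)‖ = ‖(x : K)‖ := by
  rw [Units.val_mul, norm_mul, mem_unitSphere.1 hu, mul_one]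

lemma eventually_atZero_iff {p : Kˣ → Prop} :
    (∀ᶠ x in atZero K, p x) ↔ ∃ ε > 0, ∀ x : Kˣ, ‖(x : K)‖ < ε → p x := by
  simp [atZero, (Metric.nhds_basis_ball.comap _).eventually_iff]

lemma isCompact_setOf_norm_mem_Icc [ProperSpace K] {a : ℝ} (ha : 0 < a) (b : ℝ) :
    IsCompact {x : Kˣ | ‖(x : K)‖ ∈ Set.Icc a b} := by
  rw [Units.isEmbedding_val₀.isCompact_iff]
  convert (isCompact_closedBall (0 : K) b).inter_right
    (isClosed_le continuous_const continuous_norm : IsClosed {x : K | a ≤ ‖x‖}) using 1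
  ext x
  constructor
  · rintro ⟨y, hy, rfl⟩
    exact ⟨by simpa using hy.2, hy.1⟩
  · rintro ⟨hb, hx⟩
    have hx0 : x ≠ 0 := norm_pos_iff.1 (ha.trans_le hx)
    exact ⟨Units.mk0 x hx0, ⟨hx, by simpa using hb⟩, rfl⟩

instance [ProperSpace K] : CompactSpace (unitSphere K) := by
  refine isCompact_iff_compactSpace.1 ?_
  convert isCompact_setOf_norm_mem_Icc (K := K) one_pos 1 using 1
  ext u
  simp [mem_unitSphere]

instance [IsUltrametricDist K] : TotallyDisconnectedSpace Kˣ :=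
  Units.isEmbedding_val₀.isTotallyDisconnected_range.1
    (isTotallyDisconnected_of_totallyDisconnectedSpace _)

end Topology

section RootsOfUnity

variable {F : Type*} [Field F] {f : ℕ → F} {r : ℕ} {ζ : F}

/-- The `r`-fold Fourier coefficient of the sequence `f` at the `r`-th root of unity `ζ`, without
the normalizing factor `1 / r`. -/
def fourierSum (ζ : F) (r : ℕ) (f : ℕ → F) : F := ∑ j ∈ Finset.range r, ζ⁻¹ ^ j * f j

lemma fourierSum_sub (g : ℕ → F) :
    fourierSum ζ r (f - g) = fourierSum ζ r f - fourierSum ζ r g := by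
  simp only [fourierSum, Pi.sub_apply, mul_sub, Finset.sum_sub_distrib]

lemma fourierSum_shift (hζ : ζ ^ r = 1) (hζ0 : ζ ≠ 0) (hf : f.Periodic r) (k : ℕ) :
    fourierSum ζ r (fun j => f (j + k)) = ζ ^ k * fourierSum ζ r f := by
  induction k with
  | zero => simp
  | succ k ih =>
    have hsucc (g : ℕ → F) (hg : g.Periodic r) :
        fourierSum ζ r (fun j => g (j + 1)) = ζ * fourierSum ζ r g := by
      have hcyc := Finset.sum_range_succ' (fun j => ζ⁻¹ ^ j * g j) r
      rw [Finset.sum_range_succ, hg.eq, inv_pow, hζ, pow_zero, inv_one, add_left_inj] at hcyc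
      rw [fourierSum, fourierSum, hcyc, Finset.mul_sum]
      refine Finset.sum_congr rfl fun j _ => ?_
      rw [pow_succ', mul_assoc, mul_inv_cancel_left₀ hζ0]
    have hfk : (fun j => f (j + k)).Periodic r := hf.add_const k
    calc fourierSum ζ r (fun j => f (j + (k + 1)))
        = fourierSum ζ r (fun j => f (j + 1 + k)) := by simp only [add_assoc, add_comm 1 k]
      _ = ζ ^ (k + 1) * fourierSum ζ r f := by
          rw [hsucc (fun j => f (j + k)) hfk, ih, pow_succ', mul_assoc]

lemma eq_zero_of_forall_fourierSum_eq_zero {ω : F} (hω : IsPrimitiveRoot ω r)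
    (hf : ∀ ζ : F, ζ ^ r = 1 → fourierSum ζ r f = 0) {j : ℕ} (hj : j < r) : f j = 0 := by
  have hr : 0 < r := j.zero_le.trans_lt hj
  let P : Polynomial F := ∑ i ∈ Finset.range r, Polynomial.monomial i (f i)
  have hP : P = 0 := by
    refine Polynomial.eq_zero_of_natDegree_lt_card_of_eval_eq_zero' P
      (Polynomial.nthRootsFinset r 1) (fun ξ hξ => ?_) ?_
    · have hξ := (Polynomial.mem_nthRootsFinset hr 1).1 hξ
      simpa [P, Polynomial.eval_finsetSum, fourierSum, mul_comm] using
        hf ξ⁻¹ (by rw [inv_pow, hξ, inv_one])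
    · rw [hω.card_nthRootsFinset]
      exact (Polynomial.natDegree_sum_le_of_forall_le _ _ fun i hi =>
        (Polynomial.natDegree_monomial_le _).trans
          (Nat.le_pred_of_lt (Finset.mem_range.1 hi))).trans_lt (Nat.pred_lt hr.ne')
  simpa [P, Polynomial.finsetSum_coeff, Polynomial.coeff_monomial, hj] using
    congrArg (Polynomial.coeff · j) hP

lemma exists_fourierSum_ne_zero {ω : F} (hω : IsPrimitiveRoot ω r) (hr : 0 < r)
    (hf : f.Periodic r) {M : ℕ} (hM : f M ≠ f 0) :
    ∃ ζ : F, ζ ^ r = 1 ∧ ζ ^ M ≠ 1 ∧ fourierSum ζ r f ≠ 0 := by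
  by_contra! h
  refine hM (sub_eq_zero.1 ?_)
  have hdiff := eq_zero_of_forall_fourierSum_eq_zero (f := (fun j => f (j + M)) - f) hω
    (fun ζ hζ => ?_) hr
  · simpa using hdiff
  · have hζ0 : ζ ≠ 0 := by
      rintro rfl
      simp [hr.ne'] at hζ
    rw [fourierSum_sub, fourierSum_shift hζ hζ0 hf, sub_eq_zero]
    by_cases hζM : ζ ^ M = 1
    · rw [hζM, one_mul]
    · rw [h ζ hζ hζM, mul_zero]

lemma norm_fourierSum_le {f : ℕ → ℂ} {ζ : ℂ} {B : ℝ} (hζ : ‖ζ‖ = 1) (hf : ∀ j, ‖f j‖ ≤ B) :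
    ‖fourierSum ζ r f‖ ≤ r * B := by
  refine (norm_sum_le_of_le _ fun j _ => ?_ : ‖fourierSum ζ r f‖ ≤ ∑ _ ∈ Finset.range r, B).trans
    (by simp)
  simpa [hζ] using hf j

lemma lt_orderOf_of_pow_factorial_ne_one {G : Type*} [Monoid G] {x : G} (hx : IsOfFinOrder x)
    {n : ℕ} (h : x ^ n.factorial ≠ 1) : n < orderOf x := by
  contrapose! h
  exact orderOf_dvd_iff_pow_eq_one.1 (Nat.dvd_factorial hx.orderOf_pos h)

lemma exists_mul_pow_eq_exp {b : ℂ} {d : ℕ} (hb : IsPrimitiveRoot b d) (hd : 0 < d) {a : ℂ}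
    (ha : ‖a‖ = 1) (θ₀ : ℝ) :
    ∃ (j : ℕ) (θ : ℝ), |θ - θ₀| ≤ Real.pi / d ∧ a * b ^ j = Complex.exp (θ * Complex.I) := by
  let x : ℝ := (θ₀ - a.arg) * d / (2 * Real.pi)
  have hroot : Complex.exp (2 * Real.pi * round x / d * Complex.I) ^ d = 1 := by
    rw [← Complex.exp_nat_mul, ← Complex.exp_int_mul_two_pi_mul_I (round x)]
    have hd0 : (d : ℂ) ≠ 0 := by exact_mod_cast hd.ne'
    congr 1
    field_simp
  have : NeZero d := ⟨hd.ne'⟩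
  obtain ⟨j, -, hj⟩ := hb.eq_pow_of_pow_eq_one hroot
  refine ⟨j, a.arg + 2 * Real.pi * round x / d, ?_, ?_⟩
  · have hdist : a.arg + 2 * Real.pi * round x / d - θ₀ = -((x - round x) * (2 * Real.pi / d)) := by
      simp only [x]
      field_simp
      ring
    calc |a.arg + 2 * Real.pi * round x / d - θ₀| = |x - round x| * (2 * Real.pi / d) := by
          rw [hdist, abs_neg, abs_mul, abs_of_pos (by positivity : 0 < 2 * Real.pi / (d : ℝ))]
      _ ≤ 1 / 2 * (2 * Real.pi / d) := by gcongr; exact abs_sub_round x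
      _ = Real.pi / d := by ring
  · have ha' : a = Complex.exp (a.arg * Complex.I) := by
      simpa [ha] using (Complex.norm_mul_exp_arg_mul_I a).symm
    rw [hj]
    conv_lhs => rw [ha', ← Complex.exp_add]
    push_cast
    ring_nf

end RootsOfUnity

section Germ

open Filter
open scoped Topology

variable {K : Type*} [NontriviallyNormedField K] {φ : Kˣ → ℂ} {u : unitSphere K} {m : ℕ}

/-- The `y ∈ kˣ` with `‖x‖ / (m + 1) ≤ ‖y‖ ≤ (m + 1) ‖x‖`. -/
def annulus (x : Kˣ) (m : ℕ) : Set Kˣ :=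
  {y | ‖(y : K)‖ ∈ Set.Icc (‖(x : K)‖ / (m + 1)) ((m + 1) * ‖(x : K)‖)}

lemma mul_mem_annulus {x y : Kˣ} (hy : y ∈ annulus x m) (v : unitSphere K) :
    y * v ∈ annulus x m := by
  rwa [annulus, Set.mem_ofPred_eq, norm_mul_eq_of_mem_unitSphere v.2]

lemma mem_annulus_self (x : Kˣ) (m : ℕ) : x ∈ annulus x m := by
  have hm : (1 : ℝ) ≤ m + 1 := by simp
  exact ⟨div_le_self (norm_nonneg _) hm, le_mul_of_one_le_left (norm_nonneg _) hm⟩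

lemma eventually_mul_mem_annulus (l : Kˣ) : ∀ᶠ m : ℕ in atTop, ∀ x, x * l ∈ annulus x m := by
  have hl : 0 < ‖(l : K)‖ := norm_pos_iff.2 l.ne_zero
  filter_upwards [eventually_ge_atTop ⌈‖(l : K)‖⌉₊, eventually_ge_atTop ⌈‖(l : K)‖⁻¹⌉₊]
    with m h h' x
  have h₁ : ‖(l : K)‖ ≤ m + 1 := (Nat.ceil_le.1 h).trans (by simp)
  have h₂ : (m + 1 : ℝ)⁻¹ ≤ ‖(l : K)‖ := inv_le_of_inv_le₀ hl ((Nat.ceil_le.1 h').trans (by simp))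
  constructor
  · rw [Units.val_mul, norm_mul, div_eq_mul_inv]
    gcongr
  · rw [Units.val_mul, norm_mul, mul_comm]
    gcongr

lemma isCompact_annulus [ProperSpace K] (x : Kˣ) (m : ℕ) : IsCompact (annulus x m) :=
  isCompact_setOf_norm_mem_Icc (div_pos (norm_pos_iff.2 x.ne_zero) (by positivity)) _

/-- The pairs `(w, θ)` such that, near a point `x` close to `0`, the translation by `w` coincides
with that by a power `u ^ k`, and the eigenvalue `ζ ^ k` of `u ^ k` on a nonzero Fourier component
of `φ` along `x u ^ ℤ` is so close to `exp (iθ)`, without being equal to it, that the component has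
no preimage of moderate size under `w - exp (iθ)`. The integer `m` measures how close `x` is to `0`
and how large a preimage has to be in order not to be moderate. -/
def resonantSet (φ : Kˣ → ℂ) (u : unitSphere K) (m : ℕ) : Set (unitSphere K × ℝ) :=
  {p | ∃ (x : Kˣ) (k r : ℕ) (ζ : ℂ) (B : ℝ), ‖(x : K)‖ < 1 / (m + 1) ∧ 0 < r ∧ ζ ^ r = 1 ∧
    (∀ y ∈ annulus x m, φ (y * u ^ r) = φ y ∧ ‖φ y‖ ≤ B) ∧
    (∀ y ∈ annulus x m, φ (y * p.1) = φ (y * u ^ k)) ∧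
    ζ ^ k ≠ Complex.exp (p.2 * Complex.I) ∧
    ‖ζ ^ k - Complex.exp (p.2 * Complex.I)‖ * ((m + 1) * (r * B)) <
      ‖fourierSum ζ r fun j => φ (x * u ^ j)‖}

lemma isOpen_resonantSet [ProperSpace K] (hφ : IsLocallyConstant φ) (u : unitSphere K) (m : ℕ) :
    IsOpen (resonantSet φ u m) := by
  simp only [resonantSet, Set.ofPred_exists, Set.ofPred_and]
  refine isOpen_iUnion fun x => isOpen_iUnion fun k => isOpen_iUnion fun r => isOpen_iUnion fun ζ =>
    isOpen_iUnion fun B => isOpen_const.inter <| isOpen_const.inter <| isOpen_const.inter <|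
    isOpen_const.inter <| IsOpen.inter ?_ <| IsOpen.inter ?_ ?_
  · exact (isOpen_setOf_forall_apply_mul_eq hφ (isCompact_annulus x m) _).preimage
      (continuous_subtype_val.comp continuous_fst)
  · exact isOpen_ne_fun (by fun_prop) (by fun_prop)
  · exact isOpen_lt (by fun_prop) (by fun_prop)

lemma periodic_apply_mul_pow {x y : Kˣ} {r : ℕ} (hr : ∀ y ∈ annulus x m, φ (y * u ^ r) = φ y)
    (hy : y ∈ annulus x m) : Function.Periodic (fun j : ℕ => φ (y * u ^ j)) r := fun j => by
  simpa only [pow_add, mul_assoc, Subgroup.coe_pow] using hr _ (mul_mem_annulus hy (u ^ j))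

lemma exists_pos_forall_mem_annulus_apply_mul_pow_eq [ProperSpace K] [IsUltrametricDist K]
    (hφ : IsLocallyConstant φ) (u : unitSphere K) (x : Kˣ) (m : ℕ) :
    ∃ r, 0 < r ∧ ∀ y ∈ annulus x m, φ (y * u ^ r) = φ y := by
  have hopen := (isOpen_setOf_forall_apply_mul_eq hφ (isCompact_annulus x m) 1).preimage
    (continuous_subtype_val (p := (· ∈ unitSphere K)))
  obtain ⟨r, hr, hmem⟩ := exists_pos_forall_mul_pow_mem u 1
    (hopen.mem_nhds (show (1 : unitSphere K) ∈ _ from fun _ _ => rfl))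
  exact ⟨r, hr, fun y hy => by simpa using hmem 1 y hy⟩

lemma exists_ne_exp_of_pos {θ₀ θ δ ε C : ℝ} (hθ : |θ - θ₀| < δ) (hε : 0 < ε) :
    ∃ θ' : ℝ, |θ' - θ₀| < δ ∧
      Complex.exp (θ * Complex.I) ≠ Complex.exp (θ' * Complex.I) ∧
      ‖Complex.exp (θ * Complex.I) - Complex.exp (θ' * Complex.I)‖ * C < ε := by
  have hclose : ∀ᶠ θ' : ℝ in 𝓝 θ, |θ' - θ₀| < δ ∧
      ‖Complex.exp (θ * Complex.I) - Complex.exp (θ' * Complex.I)‖ * C < ε :=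
    ((continuous_abs.comp (by fun_prop : Continuous fun θ' : ℝ => θ' - θ₀)).tendsto θ
      |>.eventually_lt_const hθ).and
    ((by fun_prop : Continuous fun θ' : ℝ => ‖Complex.exp (θ * Complex.I) -
      Complex.exp (θ' * Complex.I)‖ * C).tendsto θ |>.eventually_lt_const (by simpa using hε))
  have hderiv : HasDerivAt (fun θ' : ℝ => Complex.exp (θ' * Complex.I))
      (Complex.exp (θ * Complex.I) * (1 * Complex.I)) θ :=
    ((hasDerivAt_id θ).ofReal_comp.mul_const Complex.I).cexp
  obtain ⟨θ', ⟨h₁, h₂⟩, h₃⟩ := ((hclose.filter_mono nhdsWithin_le_nhds).and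
    (hderiv.eventually_ne (c := Complex.exp (θ * Complex.I)) (by simp))).exists
  exact ⟨θ', h₁, h₃.symm, h₂⟩

/-- If no power `u ^ E` fixes the germ of `φ` at `0`, then `φ` has, along orbits of `u` close
to `0`, nonzero Fourier components at roots of unity of arbitrarily large order. -/
lemma exists_mem_resonantSet [ProperSpace K] [IsUltrametricDist K] (hφ : IsLocallyConstant φ)
    (hu : ∀ E, 0 < E → ¬ (fun x => φ (x * u ^ E)) =ᶠ[atZero K] φ) (k : ℕ) {M : ℕ} (hM : 0 < M)
    (θ₀ : ℝ) {δ : ℝ} (hδ : 0 < δ) (m : ℕ) :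
    ∃ (j : ℕ) (θ : ℝ), |θ - θ₀| < δ ∧ (u ^ k * (u ^ M) ^ j, θ) ∈ resonantSet φ u m := by
  obtain ⟨D, hD⟩ := exists_nat_gt (Real.pi / δ)
  obtain ⟨x, hx, hne⟩ : ∃ x : Kˣ, ‖(x : K)‖ < 1 / (m + 1) ∧
      φ (x * u ^ (M * D.factorial)) ≠ φ x := by
    by_contra! h
    exact hu _ (by positivity) (eventually_atZero_iff.2 ⟨_, by positivity, h⟩)
  obtain ⟨r, hr, hper⟩ := exists_pos_forall_mem_annulus_apply_mul_pow_eq hφ u x m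
  obtain ⟨B, hB⟩ := (isCompact_annulus x m).exists_bound_of_continuousOn hφ.continuous.continuousOn
  obtain ⟨ζ, hζ, hζM, hF⟩ := exists_fourierSum_ne_zero (Complex.isPrimitiveRoot_exp r hr.ne') hr
    (periodic_apply_mul_pow hper (mem_annulus_self x m)) (M := M * D.factorial) (by simpa using hne)
  have hfin : IsOfFinOrder (ζ ^ M) := (isOfFinOrder_iff_pow_eq_one.2 ⟨r, hr, hζ⟩).pow
  have hord := lt_orderOf_of_pow_factorial_ne_one hfin (n := D) (by rwa [← pow_mul])
  obtain ⟨j, θ, hθ, hj⟩ := exists_mul_pow_eq_exp (IsPrimitiveRoot.orderOf (ζ ^ M)) hfin.orderOf_pos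
    (a := ζ ^ k) (by rw [norm_pow, Complex.norm_eq_one_of_pow_eq_one hζ hr.ne', one_pow]) θ₀
  have hθδ : |θ - θ₀| < δ := by
    refine hθ.trans_lt ((div_lt_comm₀ hδ (by exact_mod_cast hfin.orderOf_pos)).1 (hD.trans ?_))
    exact_mod_cast hord
  obtain ⟨θ', hθ', hne', hlt⟩ := exists_ne_exp_of_pos (C := (m + 1) * (r * B)) hθδ
    (norm_pos_iff.2 hF)
  rw [← hj, ← pow_mul, ← pow_add] at hne' hlt
  refine ⟨j, θ', hθ', x, k + M * j, r, ζ, B, hx, hr, hζ, fun y hy => ⟨hper y hy, hB y hy⟩,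
    fun y _ => ?_, hne', hlt⟩
  rw [← pow_mul, ← pow_add, Subgroup.coe_pow]

lemma dense_preimage_resonantSet [ProperSpace K] [IsUltrametricDist K] (hφ : IsLocallyConstant φ)
    (hu : ∀ E, 0 < E → ¬ (fun x => φ (x * u ^ E)) =ᶠ[atZero K] φ) (m : ℕ) :
    Dense (Prod.map Subtype.val id ⁻¹' resonantSet φ u m :
      Set ((Subgroup.zpowers u).topologicalClosure × ℝ)) := by
  rintro ⟨w, θ₀⟩
  refine mem_closure_iff_nhds.2 fun U hU => ?_
  rw [nhds_prod_eq, nhds_subtype, mem_prod_iff] at hU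
  obtain ⟨_, ⟨V, hV, hVU⟩, T, hT, hVT⟩ := hU
  obtain ⟨δ, hδ, hball⟩ := Metric.mem_nhds_iff.1 hT
  have hclus := mapClusterPt_atTop_pow_iff_mem_topologicalClosure_zpowers.2 w.2
  obtain ⟨k, hk⟩ := (hclus.frequently (eventually_mem_nhds_iff.2 hV)).exists
  obtain ⟨M, hM, hpow⟩ := exists_pos_forall_mul_pow_mem u (u ^ k) hk
  obtain ⟨j, θ, hθ, hmem⟩ := exists_mem_resonantSet hφ hu k hM θ₀ hδ m
  have hH : u ^ k * (u ^ M) ^ j ∈ (Subgroup.zpowers u).topologicalClosure :=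
    Subgroup.le_topologicalClosure _ (mul_mem (Subgroup.npow_mem_zpowers u k)
      (pow_mem (Subgroup.npow_mem_zpowers u M) j))
  exact ⟨⟨⟨_, hH⟩, θ⟩, hVT ⟨hVU (hpow j), hball (by rwa [Metric.mem_ball, Real.dist_eq])⟩, hmem⟩

lemma fourierSum_apply_mul_of_annulus {x y : Kˣ} {w : unitSphere K} {k r : ℕ} {ζ : ℂ} (hr : 0 < r)
    (hζ : ζ ^ r = 1) (hper : ∀ y ∈ annulus x m, φ (y * u ^ r) = φ y)
    (hw : ∀ y ∈ annulus x m, φ (y * w) = φ (y * u ^ k)) (hy : y ∈ annulus x m) :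
    fourierSum ζ r (fun j => φ (y * u ^ j * w)) =
      ζ ^ k * fourierSum ζ r fun j => φ (y * u ^ j) := by
  have hζ0 : ζ ≠ 0 := by
    rintro rfl
    simp [hr.ne'] at hζ
  rw [← fourierSum_shift hζ hζ0 (periodic_apply_mul_pow hper hy)]
  congr 1
  ext j
  rw [← Subgroup.coe_pow, hw _ (mul_mem_annulus hy (u ^ j)), Subgroup.coe_pow, pow_add, mul_assoc]

lemma not_eventuallyEq_smul_of_forall_mem_resonantSet {w : unitSphere K} {θ : ℝ}
    (h : ∀ m, (w, θ) ∈ resonantSet φ u m) :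
    ¬ (fun x => φ (x * w)) =ᶠ[atZero K] fun x => Complex.exp (θ * Complex.I) * φ x := by
  intro hw
  obtain ⟨ε, hε, hw⟩ := eventually_atZero_iff.1 hw
  obtain ⟨m, hm⟩ := exists_nat_one_div_lt hε
  obtain ⟨x, k, r, ζ, B, hx, hr, hζ, hper, hk, hne, hlt⟩ := h m
  have hB : 0 ≤ B := (norm_nonneg _).trans (hper x (mem_annulus_self x m)).2
  have hF := fourierSum_apply_mul_of_annulus hr hζ (fun y hy => (hper y hy).1) hk
    (mem_annulus_self x m)
  have horbit (j : ℕ) :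
      φ (x * u ^ j * w) = Complex.exp (θ * Complex.I) * φ (x * u ^ j) :=
    hw _ (by rw [← Subgroup.coe_pow, norm_mul_eq_of_mem_unitSphere (u ^ j).2]; exact hx.trans hm)
  have hc : fourierSum ζ r (fun j => φ (x * u ^ j * w)) =
      Complex.exp (θ * Complex.I) * fourierSum ζ r fun j => φ (x * u ^ j) := by
    simp only [fourierSum, horbit, Finset.mul_sum, mul_left_comm]
  have hF0 : fourierSum ζ r (fun j => φ (x * u ^ j)) ≠ 0 :=
    norm_pos_iff.1 (lt_of_le_of_lt (by positivity) hlt)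
  exact hne (mul_right_cancel₀ hF0 (hF.symm.trans hc))

lemma norm_fourierSum_le_of_eq_sum {x : Kˣ} {w : unitSphere K} {k r : ℕ} {ζ c : ℂ} {B : ℝ}
    (hr : 0 < r) (hζ : ζ ^ r = 1)
    (hper : ∀ y ∈ annulus x m, φ (y * u ^ r) = φ y ∧ ‖φ y‖ ≤ B)
    (hw : ∀ y ∈ annulus x m, φ (y * w) = φ (y * u ^ k)) {s : Finset Kˣ} {a : Kˣ → ℂ}
    (hs : ∀ l ∈ s, x * l ∈ annulus x m)
    (hφ : ∀ j : ℕ, φ (x * u ^ j) =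
      ∑ l ∈ s, a l * (φ (x * l * u ^ j * w) - c * φ (x * l * u ^ j))) :
    ‖fourierSum ζ r fun j => φ (x * u ^ j)‖ ≤
      ‖ζ ^ k - c‖ * ((∑ l ∈ s, ‖a l‖) * (r * B)) := by
  have hF : fourierSum ζ r (fun j => φ (x * u ^ j)) =
      ∑ l ∈ s, a l * ((ζ ^ k - c) * fourierSum ζ r fun j => φ (x * l * u ^ j)) := by
    calc fourierSum ζ r (fun j => φ (x * u ^ j))
        = ∑ l ∈ s, a l * (fourierSum ζ r (fun j => φ (x * l * u ^ j * w)) -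
            c * fourierSum ζ r fun j => φ (x * l * u ^ j)) := by
          simp only [fourierSum, hφ, Finset.mul_sum, ← Finset.sum_sub_distrib]
          rw [Finset.sum_comm]
          exact Finset.sum_congr rfl fun l _ => Finset.sum_congr rfl fun j _ => by ring
      _ = _ := Finset.sum_congr rfl fun l hl => by
          rw [fourierSum_apply_mul_of_annulus hr hζ (fun y hy => (hper y hy).1) hw (hs l hl),
            sub_mul]
  have hG (l : Kˣ) (hl : l ∈ s) : ‖fourierSum ζ r fun j => φ (x * l * u ^ j)‖ ≤ r * B :=
    norm_fourierSum_le (Complex.norm_eq_one_of_pow_eq_one hζ hr.ne') fun j => by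
      simpa using (hper _ (mul_mem_annulus (hs l hl) (u ^ j))).2
  calc ‖fourierSum ζ r fun j => φ (x * u ^ j)‖
      ≤ ∑ l ∈ s, ‖a l‖ * (‖ζ ^ k - c‖ * (r * B)) := by
        rw [hF]
        refine norm_sum_le_of_le _ fun l hl => ?_
        rw [norm_mul, norm_mul]
        gcongr
        exact hG l hl
    _ = ‖ζ ^ k - c‖ * ((∑ l ∈ s, ‖a l‖) * (r * B)) := by
        rw [← Finset.sum_mul]
        ring

lemma not_eventuallyEq_sum_of_forall_mem_resonantSet {w : unitSphere K} {θ : ℝ}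
    (h : ∀ m, (w, θ) ∈ resonantSet φ u m) (a : Kˣ →₀ ℂ) :
    ¬ φ =ᶠ[atZero K] fun x => ∑ l ∈ a.support,
      a l * (φ (x * l * w) - Complex.exp (θ * Complex.I) * φ (x * l)) := by
  intro hφ
  obtain ⟨ε, hε, hφ⟩ := eventually_atZero_iff.1 hφ
  obtain ⟨m, hm, hsum, hsupp⟩ : ∃ m : ℕ, 1 / (m + 1 : ℝ) < ε ∧ ∑ l ∈ a.support, ‖a l‖ ≤ m + 1 ∧
      ∀ l ∈ a.support, ∀ x, x * l ∈ annulus x m :=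
    (((tendsto_one_div_add_atTop_nhds_zero_nat.eventually_lt_const hε).and
      (((tendsto_atTop_add_const_right _ 1 tendsto_natCast_atTop_atTop).eventually_ge_atTop
        (∑ l ∈ a.support, ‖a l‖)).and
      ((Finset.eventually_all _).2 fun l _ => eventually_mul_mem_annulus l)))).exists
  obtain ⟨x, k, r, ζ, B, hx, hr, hζ, hper, hk, -, hlt⟩ := h m
  have horbit (j : ℕ) : φ (x * u ^ j) = ∑ l ∈ a.support,
      a l * (φ (x * l * u ^ j * w) - Complex.exp (θ * Complex.I) * φ (x * l * u ^ j)) := by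
    simpa only [mul_right_comm x _ (_ ^ j), Subgroup.coe_pow] using hφ (x * (u ^ j : unitSphere K))
      (by rw [norm_mul_eq_of_mem_unitSphere (u ^ j).2]; exact hx.trans hm)
  have hB : 0 ≤ B := (norm_nonneg _).trans (hper x (mem_annulus_self x m)).2
  refine hlt.not_ge ((norm_fourierSum_le_of_eq_sum hr hζ hper hk (fun l hl => hsupp l hl x)
    horbit).trans ?_)
  gcongr

/-- By Baire's theorem some `(w, θ)` lies in every resonant set, and then both alternatives fail
for `w` and `c = exp (iθ)`. -/
theorem exists_apply_mul_pow_eventuallyEq [ProperSpace K] [IsUltrametricDist K]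
    (hφ : IsLocallyConstant φ)
    (hdich : ∀ (w : unitSphere K) (c : ℂ),
      (fun x => φ (x * w)) =ᶠ[atZero K] (fun x => c * φ x) ∨
      ∃ a : Kˣ →₀ ℂ, φ =ᶠ[atZero K] fun x => ∑ l ∈ a.support,
        a l * (φ (x * l * w) - c * φ (x * l)))
    (u : unitSphere K) : ∃ E, 0 < E ∧ (fun x => φ (x * u ^ E)) =ᶠ[atZero K] φ := by
  by_contra! hu
  have : CompactSpace (Subgroup.zpowers u).topologicalClosure :=
    isCompact_iff_compactSpace.1 (Subgroup.isClosed_topologicalClosure _).isCompact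
  obtain ⟨⟨w, θ⟩, hwθ⟩ := (dense_iInter_of_isOpen_nat
    (fun m => (isOpen_resonantSet hφ u m).preimage (by fun_prop))
    (dense_preimage_resonantSet hφ hu)).nonempty
  have hmem (m : ℕ) : ((w : unitSphere K), θ) ∈ resonantSet φ u m := Set.mem_iInter.1 hwθ m
  rcases hdich w (Complex.exp (θ * Complex.I)) with h | ⟨a, ha⟩
  · exact not_eventuallyEq_smul_of_forall_mem_resonantSet hmem h
  · exact not_eventuallyEq_sum_of_forall_mem_resonantSet hmem a ha

end Germ

section Coinvariants

open Aff Filter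
open scoped Topology

lemma sub_inv_smul_sum_mem_sCoinvKer {K V : Type*} [Field K] [AddCommGroup V] [Module ℂ V]
    (ρ : Rep K V) {m : ℕ} (hm : m ≠ 0) (b : ℕ → K) (v : V) :
    v - (m : ℂ)⁻¹ • ∑ j ∈ Finset.range m, ρ (sS (b j)) v ∈ sCoinvKer ρ := by
  have hsum : v - (m : ℂ)⁻¹ • ∑ j ∈ Finset.range m, ρ (sS (b j)) v =
      -((m : ℂ)⁻¹ • ∑ j ∈ Finset.range m, (ρ (sS (b j)) v - v)) := by
    rw [Finset.sum_sub_distrib, smul_sub, Finset.sum_const, Finset.card_range,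
      ← Nat.cast_smul_eq_nsmul ℂ, inv_smul_smul₀ (Nat.cast_ne_zero.2 hm), neg_sub]
  rw [hsum]
  exact neg_mem (Submodule.smul_mem _ _
    (Submodule.sum_mem _ fun j _ => Submodule.subset_span ⟨b j, v, rfl⟩))

lemma exists_pos_norm_natCast_lt (K : Type*) [NormedField K] [IsUltrametricDist K]
    [ProperSpace K] {ε : ℝ} (hε : 0 < ε) : ∃ m : ℕ, 0 < m ∧ ‖(m : K)‖ < ε := by
  obtain ⟨a, -, φ, hφ, hlim⟩ := (isCompact_closedBall (0 : K) 1).tendsto_subseq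
    (x := fun n : ℕ => (n : K)) fun n => by simpa using IsUltrametricDist.norm_natCast_le_one K n
  obtain ⟨n, hn⟩ := Metric.cauchySeq_iff.1 hlim.cauchySeq ε hε
  have hlt : φ n < φ (n + 1) := hφ n.lt_succ_self
  refine ⟨φ (n + 1) - φ n, Nat.sub_pos_of_lt hlt, ?_⟩
  simpa [Nat.cast_sub hlt.le, dist_eq_norm] using hn (n + 1) n.le_succ n le_rfl

variable {K : Type*} [NontriviallyNormedField K] {ψ : AddChar K ℂ}

lemma eventually_atZero_addChar_mul_eq_one (hψ : IsLocallyConstant ψ) (b : K) :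
    ∀ᶠ x : Kˣ in atZero K, ψ (b * x) = 1 := by
  have hcont : IsLocallyConstant fun x : K => ψ (b * x) := hψ.comp_continuous (by fun_prop)
  filter_upwards [preimage_mem_comap (hcont.eventually_eq 0)] with x hx
  simpa using hx

lemma exists_pos_forall_addChar_mul_pow_eq_one [IsUltrametricDist K] [ProperSpace K]
    (hψ : IsLocallyConstant ψ) (b : K) {S : Set Kˣ}
    (hS : Bornology.IsBounded ((↑) '' S : Set K)) :
    ∃ m : ℕ, 0 < m ∧ ∀ x ∈ S, ψ (b * x) ^ m = 1 := by
  obtain ⟨ε, hε, hψε⟩ := Metric.eventually_nhds_iff.1 (hψ.eventually_eq 0)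
  obtain ⟨R, hR, hSR⟩ := hS.exists_pos_norm_le
  obtain ⟨m, hm, hmε⟩ := exists_pos_norm_natCast_lt K (ε := ε / ((‖b‖ + 1) * R)) (by positivity)
  refine ⟨m, hm, fun x hx => ?_⟩
  rw [← AddChar.map_nsmul_eq_pow, hψε, AddChar.map_zero_eq_one]
  rw [dist_zero_right, nsmul_eq_mul, norm_mul, norm_mul]
  refine lt_of_le_of_lt ?_ ((lt_div_iff₀ (by positivity)).1 hmε)
  gcongr
  · exact (lt_add_one _).le
  · exact hSR _ (Set.mem_image_of_mem _ hx)

variable {M : Submodule ℂ (Kˣ → ℂ)} (hMi : GRep.Invariant (repCx K ψ) M)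

lemma sub_repCx_apply (g : Aff K) (v : M) (x : Kˣ) :
    (GRep.sub (repCx K ψ) hMi g v : Kˣ → ℂ) x = ψ (g.s * x) * (v : Kˣ → ℂ) (x * g.t) :=
  rfl

lemma eventuallyEq_zero_of_mem_sCoinvKer (hψ : IsLocallyConstant ψ) {v : M}
    (hv : v ∈ sCoinvKer (GRep.sub (repCx K ψ) hMi)) : (v : Kˣ → ℂ) =ᶠ[atZero K] 0 := by
  rw [sCoinvKer] at hv
  induction hv using Submodule.span_induction with
  | mem w hw =>
    obtain ⟨b, v, rfl⟩ := hw
    filter_upwards [eventually_atZero_addChar_mul_eq_one hψ b] with x hx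
    simp [hx]
  | zero => rfl
  | add a b _ _ ha hb => simpa using ha.add hb
  | smul c a _ ha => simpa using ha.const_smul c

/-- Averaging `w` over the multiples of `b` multiplies `w x` by a geometric sum of ratio `ψ (bx)`,
which vanishes unless `ψ (bx) = 1`. -/
lemma exists_sub_mem_sCoinvKer_addChar_eq_one (w : M) {b : K} {m : ℕ} (hm : 0 < m)
    (hpow : ∀ x, (w : Kˣ → ℂ) x ≠ 0 → ψ (b * x) ^ m = 1) :
    ∃ w' : M, w - w' ∈ sCoinvKer (GRep.sub (repCx K ψ) hMi) ∧
      ∀ x, (w' : Kˣ → ℂ) x ≠ 0 → (w : Kˣ → ℂ) x ≠ 0 ∧ ψ (b * x) = 1 := by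
  refine ⟨_, sub_inv_smul_sum_mem_sCoinvKer _ hm.ne' (fun j => (j : K) * b) w, fun x hx => ?_⟩
  have hgeom : ∑ j ∈ Finset.range m, ψ ((j : K) * b * x) * (w : Kˣ → ℂ) x =
      (∑ j ∈ Finset.range m, ψ (b * x) ^ j) * (w : Kˣ → ℂ) x := by
    simp_rw [← Finset.sum_mul, mul_assoc, ← nsmul_eq_mul, AddChar.map_nsmul_eq_pow]
  simp only [Submodule.coe_smul, Submodule.coe_sum, Pi.smul_apply, Finset.sum_apply,
    sub_repCx_apply, sS_s, sS_t, mul_one, hgeom, smul_eq_mul, mul_ne_zero_iff] at hx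
  refine ⟨hx.2.2, of_not_not fun hne => hx.2.1 ?_⟩
  rw [geom_sum_eq hne, hpow x hx.2.2, sub_self, zero_div]

lemma exists_sub_mem_sCoinvKer_forall_addChar_eq_one {v : M}
    (hpow : ∀ b : K, ∃ m : ℕ, 0 < m ∧ ∀ x ∈ Function.support (v : Kˣ → ℂ), ψ (b * x) ^ m = 1)
    (B : Finset K) :
    ∃ w : M, v - w ∈ sCoinvKer (GRep.sub (repCx K ψ) hMi) ∧
      ∀ x, (w : Kˣ → ℂ) x ≠ 0 → (v : Kˣ → ℂ) x ≠ 0 ∧ ∀ b ∈ B, ψ (b * x) = 1 := by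
  induction B using Finset.induction_on with
  | empty => exact ⟨v, by simp, fun x hx => ⟨hx, by simp⟩⟩
  | insert b B _ ih =>
    obtain ⟨w, hvw, hw⟩ := ih
    obtain ⟨m, hm, hmb⟩ := hpow b
    obtain ⟨w', hww', hw'⟩ := exists_sub_mem_sCoinvKer_addChar_eq_one hMi w hm
      fun x hx => hmb x (hw x hx).1
    refine ⟨w', by simpa using add_mem hvw hww', fun x hx => ⟨(hw x (hw' x hx).1).1, ?_⟩⟩
    exact (Finset.forall_mem_insert _ _ _).2 ⟨(hw' x hx).2, (hw x (hw' x hx).1).2⟩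

lemma exists_finset_forall_exists_addChar_mul_ne_one (hψ : IsLocallyConstant ψ) (hψ1 : ψ ≠ 1)
    {C : Set Kˣ} (hC : IsCompact C) : ∃ B : Finset K, ∀ x ∈ C, ∃ b ∈ B, ψ (b * x) ≠ 1 := by
  obtain ⟨y, hy⟩ := AddChar.ne_one_iff.1 hψ1
  obtain ⟨B, hB⟩ := hC.elim_finite_subcover (fun b : K => {x : Kˣ | ψ (b * x) ≠ 1})
    (fun b => hψ.comp_continuous (f := fun x : Kˣ => b * (x : K)) (by fun_prop) {1}ᶜ)
    fun x _ => Set.mem_iUnion.2 ⟨y * (x⁻¹ : Kˣ), by simpa using hy⟩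
  exact ⟨B, fun x hx => by simpa using hB hx⟩

variable [ProperSpace K]

lemma exists_isCompact_support_subset {f : Kˣ → ℂ} (hf : f ∈ Cb K) (hf0 : f =ᶠ[atZero K] 0) :
    ∃ C : Set Kˣ, IsCompact C ∧ Function.support f ⊆ C := by
  obtain ⟨R, hR⟩ := (hf.2.isBounded.subset subset_closure).exists_norm_le
  obtain ⟨ε, hε, hfε⟩ := eventually_atZero_iff.1 hf0
  refine ⟨_, isCompact_setOf_norm_mem_Icc hε R, fun x hx => ⟨?_, hR _ (Set.mem_image_of_mem _ hx)⟩⟩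
  exact le_of_not_gt fun hlt => hx (hfε x hlt)

variable [IsUltrametricDist K]

lemma mem_sCoinvKer_of_eventuallyEq_zero (hψ : IsLocallyConstant ψ) (hψ1 : ψ ≠ 1)
    (hM : M ≤ Cb K) {v : M} (hv : (v : Kˣ → ℂ) =ᶠ[atZero K] 0) :
    v ∈ sCoinvKer (GRep.sub (repCx K ψ) hMi) := by
  obtain ⟨C, hC, hvC⟩ := exists_isCompact_support_subset (hM v.2) hv
  obtain ⟨B, hB⟩ := exists_finset_forall_exists_addChar_mul_ne_one hψ hψ1 hC
  obtain ⟨w, hvw, hw⟩ := exists_sub_mem_sCoinvKer_forall_addChar_eq_one hMi (fun b =>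
    exists_pos_forall_addChar_mul_pow_eq_one hψ b ((hM v.2).2.isBounded.subset subset_closure)) B
  have hw0 : w = 0 := by
    ext x
    by_contra hx
    obtain ⟨b, hb, hne⟩ := hB x (hvC (hw x hx).1)
    exact hne ((hw x hx).2 b hb)
  rwa [hw0, sub_zero] at hvw

theorem mkQ_sCoinvKer_eq_iff (hψ : IsLocallyConstant ψ) (hψ1 : ψ ≠ 1) (hM : M ≤ Cb K) {v w : M} :
    (sCoinvKer (GRep.sub (repCx K ψ) hMi)).mkQ v = (sCoinvKer (GRep.sub (repCx K ψ) hMi)).mkQ w ↔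
      (v : Kˣ → ℂ) =ᶠ[atZero K] w := by
  rw [Submodule.mkQ_apply, Submodule.mkQ_apply, Submodule.Quotient.eq, eventuallyEq_iff_sub]
  exact ⟨eventuallyEq_zero_of_mem_sCoinvKer hMi hψ,
    mem_sCoinvKer_of_eventuallyEq_zero (v := v - w) hMi hψ hψ1 hM⟩

end Coinvariants

section FiniteDimensional

open Aff Filter

lemma asAlgebraHom_piZeroT_mkQ {K V : Type*} [Field K] [AddCommGroup V] [Module ℂ V] (ρ : Rep K V)
    (a : MonoidAlgebra ℂ Kˣ) (v : V) :
    (piZeroT ρ).asAlgebraHom a ((sCoinvKer ρ).mkQ v) =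
      (sCoinvKer ρ).mkQ (∑ l ∈ a.coeff.support, a.coeff l • ρ (xT l) v) := by
  simp only [Representation.asAlgebraHom_def, MonoidAlgebra.lift_apply, Finsupp.sum,
    LinearMap.sum_apply, LinearMap.smul_apply, map_sum, map_smul, mkQ_apply_eq_piZeroT, xT_t]

lemma exists_eq_zpow_mul_of_norm_eq_zpow {K : Type*} [NontriviallyNormedField K] {ϖ x : Kˣ}
    {n : ℤ} (hx : ‖(x : K)‖ = ‖(ϖ : K)‖ ^ n) : ∃ u ∈ unitSphere K, x = ϖ ^ n * u := by
  refine ⟨(ϖ ^ n)⁻¹ * x, mem_unitSphere.2 ?_, (mul_inv_cancel_left _ _).symm⟩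
  rw [Units.val_mul, norm_mul, Units.val_inv_eq_inv_val, Units.val_zpow_eq_zpow_val, norm_inv,
    norm_zpow, hx, inv_mul_cancel₀ (zpow_ne_zero n (norm_ne_zero_iff.2 ϖ.ne_zero))]

variable {K : Type*} [NontriviallyNormedField K] [IsUltrametricDist K] [ProperSpace K]
  {ψ : AddChar K ℂ} {M : Submodule ℂ (Kˣ → ℂ)} (hMi : GRep.Invariant (repCx K ψ) M)

lemma piZeroT_mkQ_eq_smul_iff (hψ : IsLocallyConstant ψ) (hψ1 : ψ ≠ 1) (hM : M ≤ Cb K) (u : Kˣ)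
    (c : ℂ) (v : M) :
    piZeroT (GRep.sub (repCx K ψ) hMi) u ((sCoinvKer (GRep.sub (repCx K ψ) hMi)).mkQ v) =
        c • (sCoinvKer (GRep.sub (repCx K ψ) hMi)).mkQ v ↔
      (fun x => (v : Kˣ → ℂ) (x * u)) =ᶠ[atZero K] fun x => c * (v : Kˣ → ℂ) x := by
  rw [← xT_t u, ← mkQ_apply_eq_piZeroT, ← map_smul, mkQ_sCoinvKer_eq_iff hMi hψ hψ1 hM]
  simp [EventuallyEq, sub_repCx_apply]

lemma exists_piZeroT_pow_apply_eq_self (hψ : IsLocallyConstant ψ) (hψ1 : ψ ≠ 1) (hM : M ≤ Cb K)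
    (x : M ⧸ sCoinvKer (GRep.sub (repCx K ψ) hMi))
    (hx : ∀ u ∈ unitSphere K, ∀ c : ℂ, piZeroT (GRep.sub (repCx K ψ) hMi) u x = c • x ∨
      ∃ a : MonoidAlgebra ℂ Kˣ, x = piZeroT (GRep.sub (repCx K ψ) hMi) u
        ((piZeroT (GRep.sub (repCx K ψ) hMi)).asAlgebraHom a x) -
          c • (piZeroT (GRep.sub (repCx K ψ) hMi)).asAlgebraHom a x) :
    ∀ u ∈ unitSphere K, ∃ m, 0 < m ∧ piZeroT (GRep.sub (repCx K ψ) hMi) (u ^ m) x = x := by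
  intro u hu
  obtain ⟨v, rfl⟩ := Submodule.mkQ_surjective _ x
  have hdich (w : unitSphere K) (c : ℂ) : (fun y => (v : Kˣ → ℂ) (y * w)) =ᶠ[atZero K]
      (fun y => c * (v : Kˣ → ℂ) y) ∨ ∃ a : Kˣ →₀ ℂ, (v : Kˣ → ℂ) =ᶠ[atZero K] fun y =>
        ∑ l ∈ a.support, a l * ((v : Kˣ → ℂ) (y * l * w) - c * (v : Kˣ → ℂ) (y * l)) := by
    refine (hx w w.2 c).imp (piZeroT_mkQ_eq_smul_iff hMi hψ hψ1 hM w c v).1 ?_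
    rintro ⟨a, ha⟩
    rw [asAlgebraHom_piZeroT_mkQ, ← xT_t (w : Kˣ), ← mkQ_apply_eq_piZeroT, ← map_smul, ← map_sub,
      mkQ_sCoinvKer_eq_iff hMi hψ hψ1 hM] at ha
    refine ⟨a.coeff, ha.trans (.of_eq (funext fun y => ?_))⟩
    simp [mul_sub, Finset.sum_sub_distrib, Finset.mul_sum, mul_assoc, mul_left_comm c,
      mul_comm (w : Kˣ)]
  obtain ⟨m, hm, hvm⟩ := exists_apply_mul_pow_eventuallyEq (hM v.2).1 hdich ⟨u, hu⟩
  refine ⟨m, hm, ?_⟩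
  simpa using (piZeroT_mkQ_eq_smul_iff hMi hψ hψ1 hM (u ^ m) 1 v).2 (by simpa using hvm)

theorem CompSeries.finiteDimensional_piZeroT (hψ : IsLocallyConstant ψ) (hψ1 : ψ ≠ 1)
    (hM : M ≤ Cb K) {ϖ : Kˣ} (hϖ : ∀ x : Kˣ, ∃ n : ℤ, ‖(x : K)‖ = ‖(ϖ : K)‖ ^ n)
    (c : CompSeries (GRep.sub (repCx K ψ) hMi)) :
    FiniteDimensional ℂ (M ⧸ sCoinvKer (GRep.sub (repCx K ψ) hMi)) := by
  have := c.isArtinian_piZeroT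
  have := c.isNoetherian_piZeroT
  have hgen (g : Kˣ) : ∃ n : ℤ, ∃ u ∈ (unitSphere K : Set Kˣ), g = ϖ ^ n * u :=
    (hϖ g).imp fun _ => exists_eq_zpow_mul_of_norm_eq_zpow
  have hfin : FiniteDimensional ℂ (piZeroT (GRep.sub (repCx K ψ) hMi)).asModule :=
    finiteDimensional_of_forall_exists_pow_smul_eq hgen fun x _ hx => by
      simp only [MonoidAlgebra.of_apply, Representation.single_smul, one_smul] at hx ⊢
      exact exists_piZeroT_pow_apply_eq_self hMi hψ hψ1 hM x hx
  exact hfin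

end FiniteDimensional

section UnramifiedPart

open Polynomial

lemma map_aeval_apply_of_intertwines {R V W : Type*} [CommRing R] [AddCommGroup V] [Module R V]
    [AddCommGroup W] [Module R W] {E : V →ₗ[R] W} {A : Module.End R V} {B : Module.End R W}
    (h : ∀ v, E (A v) = B (E v)) (p : R[X]) (v : V) : E (aeval A p v) = aeval B p (E v) := by
  induction p using Polynomial.induction_on generalizing v with
  | C a => simp [Module.algebraMap_end_apply]
  | add p q hp hq => simp [hp, hq]
  | monomial n a ih => simp_rw [pow_succ, ← mul_assoc, map_mul _ (C a * X ^ n), aeval_X,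
      Module.End.mul_apply, ih, h]

section Semisimple

variable {k V : Type*} [Field k] [AddCommGroup V] [Module k V]

lemma maxGenEigenspace_le_range (D : Module.End k V) {a : k} (ha : a ≠ 0) :
    D.maxGenEigenspace a ≤ LinearMap.range D := by
  intro x hx
  obtain ⟨n, hn⟩ := Module.End.mem_maxGenEigenspace D a x |>.1 hx
  obtain ⟨p, r, hpr⟩ := ((isCoprime_X_sub_C_of_isUnit_sub (a := 0) (b := a)
    (by simpa using ha)).pow_right (n := n) : IsCoprime (X - C 0 : k[X]) ((X - C a) ^ n))
  refine ⟨aeval D p x, ?_⟩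
  have hx' := congrArg (fun f : k[X] => aeval D f x) hpr
  have hDa : aeval D (X - C a) = D - a • 1 := by simp [Algebra.algebraMap_eq_smul_one]
  simpa [hDa, hn, mul_comm p] using hx'

theorem iInf_ker_sup_iSup_range_eq_top [IsAlgClosed k] [FiniteDimensional k V] {ι : Type*}
    {D : ι → Module.End k V} (hcomm : ∀ i j, Commute (D i) (D j))
    (hD : ∀ i x, D i (D i x) = 0 → D i x = 0) :
    (⨅ i, LinearMap.ker (D i)) ⊔ ⨆ i, LinearMap.range (D i) = ⊤ := by
  have hker (i : ι) : (D i).maxGenEigenspace 0 ≤ LinearMap.ker (D i) := by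
    intro x hx
    obtain ⟨n, hn⟩ := Module.End.mem_maxGenEigenspace (D i) 0 x |>.1 hx
    simp only [zero_smul, sub_zero] at hn
    induction n with
    | zero => simp_all
    | succ n ih =>
      cases n with
      | zero => simpa using hn
      | succ n => exact ih (by
          simp only [pow_succ', Module.End.mul_apply] at hn ⊢
          exact hD i _ hn)
  refine eq_top_iff.2 ?_
  rw [← Module.End.iSup_iInf_maxGenEigenspace_eq_top_of_iSup_maxGenEigenspace_eq_top_of_commute D
    (fun i j _ => hcomm i j) fun i => Module.End.iSup_maxGenEigenspace_eq_top (D i)]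
  refine iSup_le fun a => ?_
  by_cases ha : ∃ i, a i ≠ 0
  · obtain ⟨i, hi⟩ := ha
    exact ((iInf_le _ i).trans (maxGenEigenspace_le_range (D i) hi)).trans
      ((le_iSup (fun i => LinearMap.range (D i)) i).trans le_sup_right)
  · push Not at ha
    exact (iInf_mono fun i => by rw [ha i]; exact hker i).trans le_sup_left

end Semisimple

lemma map_aeval_charpoly_twistOp_eq_zero {K X W : Type*} [NontriviallyNormedField K]
    [AddCommGroup X] [Module ℂ X] [FiniteDimensional ℂ X] [AddCommGroup W] [Module ℂ W]
    (τ : Representation ℂ Kˣ X) (χ : Kˣ →* ℂˣ) (ϖ : Kˣ)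
    (hss : ∀ u ∈ unitSphere K, ∀ x, ((χ u : ℂ) • τ u - 1) (((χ u : ℂ) • τ u - 1) x) = 0 →
      ((χ u : ℂ) • τ u - 1) x = 0)
    (L : X →ₗ[ℂ] W)
    (hL : ∀ u ∈ unitSphere K, ∀ x, L (((χ u : ℂ) • τ u) x) = L x) (x : X) :
    L (aeval ((χ ϖ : ℂ) • τ ϖ) (twistOp τ χ ϖ).charpoly x) = 0 := by
  set p := (twistOp τ χ ϖ).charpoly
  have hcomm (u w : Kˣ) : Commute ((χ u : ℂ) • τ u) ((χ w : ℂ) • τ w) :=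
    (((Commute.all u w).map τ).smul_left _).smul_right _
  have hcomm1 (u w : Kˣ) : Commute ((χ u : ℂ) • τ u - 1) ((χ w : ℂ) • τ w) :=
    (hcomm u w).sub_left (Commute.one_left _)
  suffices h : ⊤ ≤ LinearMap.ker (L ∘ₗ aeval ((χ ϖ : ℂ) • τ ϖ) p) from
    h (Submodule.mem_top (x := x))
  rw [← iInf_ker_sup_iSup_range_eq_top (D := fun u : unitSphere K => (χ u : ℂ) • τ (u : Kˣ) - 1)
    (fun u w => (hcomm1 u w).sub_right (Commute.one_right _)) fun u => hss u u.2]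
  refine sup_le (fun z hz => ?_) (iSup_le fun u => ?_)
  · have hzu : z ∈ unrPart τ χ := fun u hu => sub_eq_zero.1
      ((Submodule.mem_iInf _).1 hz ⟨u, mem_unitSphere.2 hu⟩)
    have hcayley := map_aeval_apply_of_intertwines (E := (unrPart τ χ).subtype)
      (A := twistOp τ χ ϖ) (B := (χ ϖ : ℂ) • τ ϖ) (fun _ => rfl) p ⟨z, hzu⟩
    rw [LinearMap.aeval_self_charpoly] at hcayley
    simpa using congrArg L hcayley.symm
  · rintro _ ⟨y, rfl⟩
    have hy := map_aeval_apply_of_intertwines (E := (χ u : ℂ) • τ (u : Kˣ) - 1)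
      (A := (χ ϖ : ℂ) • τ ϖ) (B := (χ ϖ : ℂ) • τ ϖ)
      (fun v => LinearMap.congr_fun (hcomm1 u ϖ).eq v) p y
    rw [LinearMap.mem_ker, LinearMap.comp_apply, ← hy, LinearMap.sub_apply, map_sub, hL u u.2,
      Module.End.one_apply, sub_self]

end UnramifiedPart

section Twist

open Aff Filter Polynomial

/-- Right translation by `u` on locally constant functions. -/
def translate {G : Type*} [TopologicalSpace G] [Mul G] [ContinuousMul G] (u : G) :
    Module.End ℂ (LocallyConstant G ℂ) :=
  LocallyConstant.comapₗ ℂ (ContinuousMap.mulRight u)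

@[simp]
lemma translate_apply {G : Type*} [TopologicalSpace G] [Mul G] [ContinuousMul G] (u : G)
    (g : LocallyConstant G ℂ) (x : G) : translate u g x = g (x * u) :=
  rfl

lemma translate_pow_apply {G : Type*} [TopologicalSpace G] [Monoid G] [ContinuousMul G] (u : G)
    (j : ℕ) (g : LocallyConstant G ℂ) (x : G) : (translate u ^ j) g x = g (x * u ^ j) := by
  induction j generalizing x with
  | zero => simp
  | succ j ih => rw [pow_succ', Module.End.mul_apply, translate_apply, ih, mul_assoc, ← pow_succ']

lemma aeval_translate_apply {G : Type*} [TopologicalSpace G] [Monoid G] [ContinuousMul G]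
    (p : ℂ[X]) (u : G) (g : LocallyConstant G ℂ) (x : G) :
    aeval (translate u) p g x =
      ∑ j ∈ Finset.range (p.natDegree + 1), p.coeff j * g (x * u ^ j) := by
  rw [aeval_eq_sum_range, LinearMap.sum_apply]
  simp only [← LocallyConstant.evalₗ_apply (R := ℂ) (x := x), map_sum, LinearMap.smul_apply,
    map_smul]
  simp [translate_pow_apply]

lemma eq_of_forall_add_two_eq {R : Type*} [Ring R] [NoZeroDivisors R] [CharZero R] {a : ℕ → R}
    (ha : ∀ n, a (n + 2) - a (n + 1) = a (n + 1) - a n) {m : ℕ} (hm : m ≠ 0) (h : a m = a 0) :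
    a 1 = a 0 := by
  have hslope (n : ℕ) : a (n + 1) - a n = a 1 - a 0 := by
    induction n with
    | zero => rfl
    | succ n ih => rw [ha n, ih]
  have haffine (n : ℕ) : a n - a 0 = n * (a 1 - a 0) := by
    induction n with
    | zero => simp
    | succ n ih =>
      rw [← sub_add_sub_cancel _ (a n), hslope, ih, Nat.cast_succ, add_one_mul, add_comm]
  have hm' := haffine m
  rw [h, sub_self, eq_comm, mul_eq_zero] at hm'
  exact sub_eq_zero.1 (hm'.resolve_left (Nat.cast_ne_zero.2 hm))

lemma isLocallyConstant_of_smoothMulChar {K : Type*} [NontriviallyNormedField K] {χ : Kˣ →* ℂˣ}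
    (hχ : SmoothMulChar χ) : IsLocallyConstant fun x : Kˣ => (χ x : ℂ) := by
  refine (IsLocallyConstant.iff_exists_open _).2 fun x =>
    ⟨_, hχ.preimage (continuous_const_mul x⁻¹), by simp, fun y hy => ?_⟩
  have hxy : χ (x⁻¹ * y) = 1 := hy
  rw [map_mul, map_inv, inv_mul_eq_one] at hxy
  rw [hxy]

variable {K : Type*} [NontriviallyNormedField K] {M : Submodule ℂ (Kˣ → ℂ)} {χ : Kˣ →* ℂˣ}

/-- The twist `f ↦ f χ` of the functions of `M` by the smooth character `χ`. -/
def twist (hχ : SmoothMulChar χ) (hM : M ≤ Cb K) : M →ₗ[ℂ] LocallyConstant Kˣ ℂ where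
  toFun v := ⟨fun x => (v : Kˣ → ℂ) x * χ x,
    (hM v.2).1.comp₂ (isLocallyConstant_of_smoothMulChar hχ) (· * ·)⟩
  map_add' v w := by ext x; simp [add_mul]
  map_smul' c v := by ext x; simp [mul_assoc]

@[simp]
lemma twist_apply (hχ : SmoothMulChar χ) (hM : M ≤ Cb K) (v : M) (x : Kˣ) :
    twist hχ hM v x = (v : Kˣ → ℂ) x * χ x :=
  rfl

variable {ψ : AddChar K ℂ} (hMi : GRep.Invariant (repCx K ψ) M)

lemma twist_smul_sub_xT_apply (hχ : SmoothMulChar χ) (hM : M ≤ Cb K) (u : Kˣ) (v : M) :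
    twist hχ hM (((χ u : ℂ) • GRep.sub (repCx K ψ) hMi (xT u)) v) =
      translate u (twist hχ hM v) := by
  ext x
  simp [sub_repCx_apply, mul_comm, mul_left_comm]

lemma smul_piZeroT_mkQ (u : Kˣ) (v : M) :
    (sCoinvKer (GRep.sub (repCx K ψ) hMi)).mkQ
        (((χ u : ℂ) • GRep.sub (repCx K ψ) hMi (xT u)) v) =
      ((χ u : ℂ) • piZeroT (GRep.sub (repCx K ψ) hMi) u)
        ((sCoinvKer (GRep.sub (repCx K ψ) hMi)).mkQ v) := by
  rw [LinearMap.smul_apply, map_smul, mkQ_apply_eq_piZeroT, xT_t, LinearMap.smul_apply]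

variable [IsUltrametricDist K] [ProperSpace K]

lemma aeval_smul_piZeroT_mkQ_eq_zero_iff (hψ : IsLocallyConstant ψ) (hψ1 : ψ ≠ 1)
    (hχ : SmoothMulChar χ) (hM : M ≤ Cb K) (p : ℂ[X]) (u : Kˣ) (v : M) :
    aeval ((χ u : ℂ) • piZeroT (GRep.sub (repCx K ψ) hMi) u) p
        ((sCoinvKer (GRep.sub (repCx K ψ) hMi)).mkQ v) = 0 ↔
      aeval (translate u) p (twist hχ hM v) =ᶠ[atZero K] 0 := by
  rw [← map_aeval_apply_of_intertwines (smul_piZeroT_mkQ hMi u),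
    ← map_aeval_apply_of_intertwines (twist_smul_sub_xT_apply hMi hχ hM u),
    ← map_zero (Submodule.mkQ _), mkQ_sCoinvKer_eq_iff hMi hψ hψ1 hM]
  exact eventually_congr (.of_forall fun x => by simp)

lemma smul_piZeroT_sub_one_apply_eq_zero (hψ : IsLocallyConstant ψ) (hψ1 : ψ ≠ 1)
    (hχ : SmoothMulChar χ) (hM : M ≤ Cb K) {u : Kˣ} (hu : u ∈ unitSphere K)
    {x : M ⧸ sCoinvKer (GRep.sub (repCx K ψ) hMi)}
    (hx : ((χ u : ℂ) • piZeroT (GRep.sub (repCx K ψ) hMi) u - 1)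
      (((χ u : ℂ) • piZeroT (GRep.sub (repCx K ψ) hMi) u - 1) x) = 0) :
    ((χ u : ℂ) • piZeroT (GRep.sub (repCx K ψ) hMi) u - 1) x = 0 := by
  obtain ⟨v, rfl⟩ := Submodule.mkQ_surjective _ x
  have hiff (p : ℂ[X]) := aeval_smul_piZeroT_mkQ_eq_zero_iff hMi hψ hψ1 hχ hM p u v
  have hsq := (hiff ((X - 1) ^ 2)).1 (by simpa [pow_two] using hx)
  suffices h : aeval (translate u) (X - 1 : ℂ[X]) (twist hχ hM v) =ᶠ[atZero K] 0 by
    simpa using (hiff (X - 1)).2 h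
  set g := twist hχ hM v
  obtain ⟨ε, hε, hsq⟩ := eventually_atZero_iff.1 hsq
  refine eventually_atZero_iff.2 ⟨ε, hε, fun y hy => ?_⟩
  have hsecond (n : ℕ) : g (y * u ^ (n + 2)) - g (y * u ^ (n + 1)) =
      g (y * u ^ (n + 1)) - g (y * u ^ n) := by
    have h := hsq (y * u ^ n) (by rwa [norm_mul_eq_of_mem_unitSphere (pow_mem hu n)])
    simpa [pow_two, LocallyConstant.sub_apply, sub_eq_zero, mul_assoc, ← pow_succ] using h
  obtain ⟨m, hm, hgm⟩ := exists_pos_forall_mul_pow_mem (⟨u, hu⟩ : unitSphere K) 1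
    (V := {w | g (y * w) = g y}) ((g.isLocallyConstant.isOpen_fiber (g y)).preimage
      (continuous_const.mul continuous_subtype_val) |>.mem_nhds (by simp))
  have hper : g (y * u ^ m) = g (y * u ^ 0) := by simpa using hgm 1
  simpa [LocallyConstant.sub_apply, sub_eq_zero] using
    eq_of_forall_add_two_eq (a := fun n => g (y * u ^ n)) hsecond hm.ne' hper

end Twist

section Recurrences

open Filter Polynomial

/-- The shift `b ↦ (n ↦ b (n + 1))` on two-sided complex sequences. -/
def shift : Module.End ℂ (ℤ → ℂ) := LinearMap.funLeft ℂ ℂ (· + 1)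

@[simp]
lemma shift_apply (b : ℤ → ℂ) (n : ℤ) : shift b n = b (n + 1) :=
  rfl

lemma shift_pow_apply (j : ℕ) (b : ℤ → ℂ) (n : ℤ) : (shift ^ j) b n = b (n + j) := by
  induction j generalizing n with
  | zero => simp
  | succ j ih => rw [pow_succ', Module.End.mul_apply, shift_apply, ih, Nat.cast_succ, add_assoc,
      add_comm 1]

lemma aeval_shift_apply (p : ℂ[X]) (b : ℤ → ℂ) (n : ℤ) :
    aeval shift p b n = ∑ j ∈ Finset.range (p.natDegree + 1), p.coeff j * b (n + j) := by
  simp [aeval_eq_sum_range, shift_pow_apply]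

lemma aeval_shift_eventuallyEq_zero_atBot (p : ℂ[X]) {b : ℤ → ℂ} (hb : b =ᶠ[atBot] 0) :
    aeval shift p b =ᶠ[atBot] 0 := by
  have hshift (j : ℕ) : ∀ᶠ n : ℤ in atBot, b (n + j) = 0 :=
    (tendsto_atBot_add_const_right _ (j : ℤ) tendsto_id).eventually hb
  filter_upwards [(Finset.eventually_all (Finset.range (p.natDegree + 1))).2 fun j _ => hshift j]
    with n hn
  rw [aeval_shift_apply, Pi.zero_apply]
  exact Finset.sum_eq_zero fun j hj => by rw [hn j hj, mul_zero]

lemma hasSum_aeval_shift_mul_zpow (p : ℂ[X]) {b : ℤ → ℂ} {t Z : ℂ} (ht : t ≠ 0)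
    (hb : HasSum (fun n => b n * t ^ n) Z) :
    HasSum (fun n => aeval shift p b n * t ^ n) (p.eval t⁻¹ * Z) := by
  induction p using Polynomial.induction_on generalizing b Z with
  | C a => simpa [Module.algebraMap_end_apply, mul_assoc] using hb.mul_left a
  | add p q hp hq => simpa [add_mul] using (hp hb).add (hq hb)
  | monomial n a ih =>
    have hshift : HasSum (fun n => shift b n * t ^ n) (t⁻¹ * Z) := by
      refine (((Equiv.addRight (1 : ℤ)).hasSum_iff.2 hb).mul_left t⁻¹).congr_fun fun m => ?_
      simp [zpow_add_one₀ ht]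
      field_simp
    have h := ih hshift
    rw [pow_succ, ← mul_assoc, map_mul _ (C a * X ^ n), aeval_X]
    simpa [pow_succ, mul_assoc] using h

lemma eval_inv_mul_eq_sum {p : ℂ[X]} {b : ℤ → ℂ} {t Z : ℂ} (ht : t ≠ 0)
    (hb : HasSum (fun n => b n * t ^ n) Z) {S : Finset ℤ}
    (hS : ∀ n ∉ S, aeval shift p b n = 0) :
    p.eval t⁻¹ * Z = ∑ n ∈ S, aeval shift p b n * t ^ n :=
  (hasSum_aeval_shift_mul_zpow p ht hb).unique
    (hasSum_sum_of_ne_finset_zero fun n hn => by rw [hS n hn, zero_mul])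

lemma norm_le_mul_pow_of_recurrence {R : Type*} [NormedRing R] {p : R[X]} (hp : p.Monic)
    {b : ℕ → R} {C : ℝ} {N : ℕ} (hC : ∀ m ≤ N + p.natDegree, ‖b m‖ ≤ C)
    (hb : ∀ m ≥ N, ∑ j ∈ Finset.range (p.natDegree + 1), p.coeff j * b (m + j) = 0) (m : ℕ) :
    ‖b m‖ ≤ C * (1 + ∑ j ∈ Finset.range p.natDegree, ‖p.coeff j‖) ^ m := by
  set r := 1 + ∑ j ∈ Finset.range p.natDegree, ‖p.coeff j‖ with hr
  have hC0 : 0 ≤ C := (norm_nonneg _).trans (hC 0 (Nat.zero_le _))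
  have hr1 : 1 ≤ r := le_add_of_nonneg_right (Finset.sum_nonneg fun _ _ => norm_nonneg _)
  induction m using Nat.strong_induction_on with
  | _ m ih =>
    rcases le_or_gt m (N + p.natDegree) with hm | hm
    · exact (hC m hm).trans (le_mul_of_one_le_right hC0 (one_le_pow₀ hr1))
    · obtain ⟨k, rfl⟩ : ∃ k, m = k + p.natDegree := ⟨m - p.natDegree, by omega⟩
      have hk := hb k (by omega)
      rw [Finset.sum_range_succ, hp.coeff_natDegree, one_mul, add_eq_zero_iff_neg_eq] at hk
      obtain ⟨l, hl⟩ : ∃ l, k + p.natDegree = l + 1 := ⟨k + p.natDegree - 1, by omega⟩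
      have hterm : ∀ j ∈ Finset.range p.natDegree,
          ‖p.coeff j * b (k + j)‖ ≤ ‖p.coeff j‖ * (C * r ^ l) := fun j hj => by
        have hj := Finset.mem_range.1 hj
        refine (norm_mul_le _ _).trans (mul_le_mul_of_nonneg_left ?_ (norm_nonneg _))
        refine (ih (k + j) (by omega)).trans (mul_le_mul_of_nonneg_left ?_ hC0)
        exact pow_le_pow_right₀ hr1 (by omega)
      calc ‖b (k + p.natDegree)‖
          = ‖∑ j ∈ Finset.range p.natDegree, p.coeff j * b (k + j)‖ := by rw [← hk, norm_neg]
        _ ≤ (r - 1) * (C * r ^ l) := by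
          rw [hr, add_sub_cancel_left, Finset.sum_mul]
          exact norm_sum_le_of_le _ hterm
        _ ≤ r * (C * r ^ l) := by gcongr; linarith
        _ = C * r ^ (k + p.natDegree) := by rw [hl]; ring

end Recurrences

section LFactor

open Filter Polynomial
open scoped Topology

lemma det_id_sub_smul {F V : Type*} [Field F] [AddCommGroup V] [Module F V]
    [FiniteDimensional F V] (T : Module.End F V) {t : F} (ht : t ≠ 0) :
    LinearMap.det (LinearMap.id - t • T) = t ^ Module.finrank F V * T.charpoly.eval t⁻¹ := by
  rw [LinearMap.eval_charpoly, ← LinearMap.det_smul, smul_sub, Algebra.algebraMap_eq_smul_one,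
    smul_inv_smul₀ ht, Module.End.one_eq_id]

lemma eventually_eval_inv_ne_zero {𝕜 : Type*} [NontriviallyNormedField 𝕜] {p : 𝕜[X]}
    (hp : p ≠ 0) : ∀ᶠ t in 𝓝[≠] (0 : 𝕜), p.eval t⁻¹ ≠ 0 := by
  have hroots := Bornology.isBounded_def.1 p.roots.toFinset.finite_toSet.isBounded
  filter_upwards [tendsto_inv₀_nhdsNE_zero.eventually hroots] with t ht
  simpa [hp] using ht

lemma tendsto_cpow_comap_re_atTop {q : ℝ} (hq : 0 < q) (hq1 : q < 1) :
    Tendsto (fun s : ℂ => (q : ℂ) ^ s) (comap Complex.re atTop) (𝓝[≠] 0) := by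
  have hq0 : (q : ℂ) ≠ 0 := Complex.ofReal_ne_zero.2 hq.ne'
  simp_rw [Complex.cpow_def_of_ne_zero hq0, ← Complex.ofReal_log hq.le]
  refine Complex.tendsto_exp_comap_re_atBot_nhdsNE.comp (tendsto_comap_iff.2 ?_)
  simpa [Function.comp_def] using
    tendsto_comap.const_mul_atTop_of_neg (Real.log_neg hq hq1)

lemma exists_forall_re_gt_cpow {q : ℝ} (hq : 0 < q) (hq1 : q < 1) {p : ℂ → Prop}
    (hp : ∀ᶠ t in 𝓝[≠] 0, p t) : ∃ s₀ : ℝ, ∀ s : ℂ, s₀ < s.re → p ((q : ℂ) ^ s) := by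
  obtain ⟨s₀, -, hs₀⟩ := (atTop_basis_Ioi.comap Complex.re).eventually_iff.1
    ((tendsto_cpow_comap_re_atTop hq hq1).eventually hp)
  exact ⟨s₀, fun s hs => hs₀ hs⟩

lemma eventually_abs_mul_norm_lt_one {E : Type*} [SeminormedAddCommGroup E] (r : ℝ) :
    ∀ᶠ t in 𝓝 (0 : E), |r * ‖t‖| < 1 :=
  (by fun_prop : Continuous fun t : E => |r * ‖t‖|).continuousAt.eventually_lt_const (by simp)

lemma differentiable_cpow_mul_sum_zpow {q : ℂ} (hq : q ≠ 0) (d : ℕ) (S : Finset ℤ) (R : ℤ → ℂ) :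
    Differentiable ℂ fun s : ℂ => (q ^ s) ^ d * ∑ n ∈ S, R n * (q ^ s) ^ n := by
  have hcpow : Differentiable ℂ fun s : ℂ => q ^ s := differentiable_id.const_cpow (.inl hq)
  refine (hcpow.fun_pow d).mul (.fun_sum fun n _ => ?_)
  exact (hcpow.zpow (.inl fun s => Complex.cpow_ne_zero_iff.2 (.inl hq))).const_mul (R n)

end LFactor

section Shells

open Filter MeasureTheory Polynomial

variable {K : Type*} [NontriviallyNormedField K] {ϖ : Kˣ}

/-- The elements of `kˣ` with the same norm as `ϖⁿ`; for a uniformizer `ϖ` this is `ϖⁿ𝔬ˣ`. -/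
def shell (ϖ : Kˣ) (n : ℤ) : Set Kˣ := {x | ‖(x : K)‖ = ‖(ϖ : K)‖ ^ n}

lemma mem_shell {n : ℤ} {x : Kˣ} : x ∈ shell ϖ n ↔ ‖(x : K)‖ = ‖(ϖ : K)‖ ^ n :=
  Iff.rfl

lemma mul_mem_shell_iff {n k : ℤ} {u x : Kˣ} (hu : u ∈ shell ϖ k) :
    x * u ∈ shell ϖ (n + k) ↔ x ∈ shell ϖ n := by
  have hϖ : 0 < ‖(ϖ : K)‖ := norm_pos_iff.2 ϖ.ne_zero
  rw [mem_shell, mem_shell, Units.val_mul, norm_mul, mem_shell.1 hu, zpow_add₀ hϖ.ne',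
    mul_left_inj' (zpow_pos hϖ k).ne']

lemma zpow_mem_shell (n : ℤ) : ϖ ^ n ∈ shell ϖ n := by
  simp [mem_shell]

lemma pow_mem_shell (n : ℕ) : ϖ ^ n ∈ shell ϖ n := by
  simp [mem_shell]

lemma iUnion_shell (hϖ : ∀ x : Kˣ, ∃ n : ℤ, ‖(x : K)‖ = ‖(ϖ : K)‖ ^ n) :
    ⋃ n, shell ϖ n = Set.univ :=
  Set.iUnion_eq_univ_iff.2 hϖ

lemma pairwise_disjoint_shell (hϖ : ‖(ϖ : K)‖ < 1) : Pairwise (Function.onFun Disjoint (shell ϖ)) :=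
  fun _ _ hmn => Set.disjoint_left.2 fun _ hm hn =>
    hmn (zpow_right_injective₀ (norm_pos_iff.2 ϖ.ne_zero) hϖ.ne (hm.symm.trans hn))

lemma isCompact_shell [ProperSpace K] (ϖ : Kˣ) (n : ℤ) : IsCompact (shell ϖ n) := by
  simpa [shell, Set.Icc_self] using isCompact_setOf_norm_mem_Icc (K := K)
    (zpow_pos (norm_pos_iff.2 ϖ.ne_zero) n) (‖(ϖ : K)‖ ^ n)

lemma norm_cpow_of_mem_shell {n : ℤ} {x : Kˣ} (hx : x ∈ shell ϖ n) (s : ℂ) :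
    (‖(x : K)‖ : ℂ) ^ s = ((‖(ϖ : K)‖ : ℂ) ^ s) ^ n := by
  have him : (Complex.log ‖(ϖ : K)‖ * n).im = 0 := by
    rw [← Complex.ofReal_log (norm_nonneg _), ← Complex.ofReal_intCast, ← Complex.ofReal_mul,
      Complex.ofReal_im]
  rw [mem_shell.1 hx, Complex.ofReal_zpow, ← Complex.cpow_intCast, ← Complex.cpow_mul, mul_comm,
    Complex.cpow_mul_int]
  · exact him ▸ neg_lt_zero.2 Real.pi_pos
  · exact him ▸ Real.pi_pos.le

lemma eventually_atTop_forall_mem_shell (hϖ : ‖(ϖ : K)‖ < 1) {p : Kˣ → Prop}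
    (hp : ∀ᶠ x in atZero K, p x) : ∀ᶠ n : ℤ in atTop, ∀ x ∈ shell ϖ n, p x := by
  obtain ⟨ε, hε, hp⟩ := eventually_atZero_iff.1 hp
  obtain ⟨N, hN⟩ := exists_pow_lt_of_lt_one hε hϖ
  filter_upwards [eventually_ge_atTop (N : ℤ)] with n hn x hx
  refine hp x ((mem_shell.1 hx).trans_lt (lt_of_le_of_lt ?_ hN))
  rw [← zpow_natCast]
  exact zpow_le_zpow_right_of_le_one₀ (norm_pos_iff.2 ϖ.ne_zero) hϖ.le hn

lemma eventually_atBot_forall_mem_shell_eq_zero (hϖ : ‖(ϖ : K)‖ < 1) {f : Kˣ → ℂ}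
    (hf : f ∈ Cb K) : ∀ᶠ n : ℤ in atBot, ∀ x ∈ shell ϖ n, f x = 0 := by
  obtain ⟨R, hR⟩ := (hf.2.isBounded.subset subset_closure).exists_norm_le
  obtain ⟨N, hN⟩ := pow_unbounded_of_one_lt R ((one_lt_inv₀ (norm_pos_iff.2 ϖ.ne_zero)).2 hϖ)
  filter_upwards [eventually_le_atBot (-N : ℤ)] with n hn x hx
  by_contra hfx
  refine (hN.trans_le ?_).not_ge (hR x (Set.mem_image_of_mem _ hfx))
  rw [mem_shell.1 hx, inv_pow, ← zpow_natCast, ← zpow_neg]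
  exact zpow_le_zpow_right_of_le_one₀ (norm_pos_iff.2 ϖ.ne_zero) hϖ.le hn

lemma eventually_atBot_forall_mem_shell_twist_eq_zero {M : Submodule ℂ (Kˣ → ℂ)}
    {χ : Kˣ →* ℂˣ} (hχ : SmoothMulChar χ) (hM : M ≤ Cb K) (hϖ : ‖(ϖ : K)‖ < 1) (v : M) :
    ∀ᶠ n : ℤ in atBot, ∀ x ∈ shell ϖ n, twist hχ hM v x = 0 := by
  filter_upwards [eventually_atBot_forall_mem_shell_eq_zero hϖ (hM v.2)] with n hn x hx
  rw [twist_apply, hn x hx, zero_mul]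

lemma exists_norm_le_mul_pow_of_mem_shell [ProperSpace K] (hϖ : ‖(ϖ : K)‖ < 1)
    {g : LocallyConstant Kˣ ℂ} {p : ℂ[X]} (hp : p.Monic)
    (hg : aeval (translate ϖ) p g =ᶠ[atZero K] 0) :
    ∃ C r : ℝ, ∀ m : ℕ, ∀ x ∈ shell ϖ m, ‖g x‖ ≤ C * r ^ m := by
  obtain ⟨N, hN⟩ := eventually_atTop.1
    (tendsto_natCast_atTop_atTop.eventually (eventually_atTop_forall_mem_shell hϖ hg))
  obtain ⟨C, hC⟩ := (isCompact_setOf_norm_mem_Icc (K := K)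
    (pow_pos (norm_pos_iff.2 ϖ.ne_zero) (N + p.natDegree)) 1).exists_bound_of_continuousOn
    g.continuous.continuousOn
  refine ⟨C, 1 + ∑ j ∈ Finset.range p.natDegree, ‖p.coeff j‖, fun m x hx => ?_⟩
  obtain ⟨y, rfl⟩ : ∃ y, y * ϖ ^ m = x := ⟨x * (ϖ ^ m)⁻¹, inv_mul_cancel_right _ _⟩
  rw [← zero_add (m : ℤ), mul_mem_shell_iff (pow_mem_shell m)] at hx
  have hy (k : ℕ) : y * ϖ ^ k ∈ shell ϖ k := by
    simpa using (mul_mem_shell_iff (pow_mem_shell k)).2 hx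
  refine norm_le_mul_pow_of_recurrence hp (b := fun k => g (y * ϖ ^ k)) (N := N) (fun k hk => ?_)
    (fun k hk => ?_) m
  · refine hC _ ⟨?_, ?_⟩
    · rw [mem_shell.1 (hy k), zpow_natCast]
      exact pow_le_pow_of_le_one (norm_nonneg _) hϖ.le hk
    · rw [mem_shell.1 (hy k), zpow_natCast]
      exact pow_le_one₀ (norm_nonneg _) hϖ.le
  · have hrec := hN k hk _ (hy k)
    rw [aeval_translate_apply] at hrec
    simpa [pow_add, mul_assoc] using hrec

variable [MeasurableSpace Kˣ] [BorelSpace Kˣ] (μ : Measure Kˣ)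

lemma measure_shell [μ.IsMulLeftInvariant] (ϖ : Kˣ) (n : ℤ) :
    μ (shell ϖ n) = μ (shell ϖ 0) := by
  rw [← measure_preimage_mul_right μ (ϖ ^ n)]
  congr 1
  ext x
  simpa using mul_mem_shell_iff (n := 0) (x := x) (zpow_mem_shell (ϖ := ϖ) n)

variable [ProperSpace K]

lemma measurableSet_shell (ϖ : Kˣ) (n : ℤ) : MeasurableSet (shell ϖ n) :=
  (isCompact_shell ϖ n).measurableSet

lemma integrableOn_shell [IsFiniteMeasureOnCompacts μ] (g : LocallyConstant Kˣ ℂ) (ϖ : Kˣ)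
    (n : ℤ) : IntegrableOn g (shell ϖ n) μ :=
  g.continuous.continuousOn.integrableOn_compact (isCompact_shell ϖ n)

/-- The sequence of integrals of a locally constant function over the shells. -/
def shellIntegral [IsFiniteMeasureOnCompacts μ] (ϖ : Kˣ) :
    LocallyConstant Kˣ ℂ →ₗ[ℂ] ℤ → ℂ where
  toFun g n := ∫ x in shell ϖ n, g x ∂μ
  map_add' g h := funext fun _ =>
    integral_add (integrableOn_shell μ g ϖ _) (integrableOn_shell μ h ϖ _)
  map_smul' c g := funext fun _ => integral_const_mul c g

lemma shellIntegral_apply [IsFiniteMeasureOnCompacts μ] (g : LocallyConstant Kˣ ℂ) (n : ℤ) :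
    shellIntegral μ ϖ g n = ∫ x in shell ϖ n, g x ∂μ :=
  rfl

lemma shellIntegral_translate_apply [μ.IsMulLeftInvariant] [IsFiniteMeasureOnCompacts μ]
    (g : LocallyConstant Kˣ ℂ) {u : Kˣ} {k : ℤ} (hu : u ∈ shell ϖ k) (n : ℤ) :
    shellIntegral μ ϖ (translate u g) n = shellIntegral μ ϖ g (n + k) := by
  simp_rw [shellIntegral_apply, ← integral_indicator (measurableSet_shell ϖ _)]
  rw [← integral_mul_right_eq_self ((shell ϖ (n + k)).indicator g) u]
  refine integral_congr_ae (.of_forall fun x => ?_)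
  simp [Set.indicator, mul_mem_shell_iff hu]

lemma shellIntegral_eventuallyEq_zero [IsFiniteMeasureOnCompacts μ] {l : Filter ℤ}
    {g : LocallyConstant Kˣ ℂ} (hg : ∀ᶠ n in l, ∀ x ∈ shell ϖ n, g x = 0) :
    shellIntegral μ ϖ g =ᶠ[l] 0 := by
  filter_upwards [hg] with n hn
  exact setIntegral_eq_zero_of_forall_eq_zero hn

end Shells

section ZetaIntegral

open Aff Filter MeasureTheory Polynomial
open scoped Topology

lemma exists_norm_twist_le_mul_pow {K : Type*} [NontriviallyNormedField K] [IsUltrametricDist K]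
    [ProperSpace K] {ϖ : Kˣ} {ψ : AddChar K ℂ} {M : Submodule ℂ (Kˣ → ℂ)} {χ : Kˣ →* ℂˣ}
    (hMi : GRep.Invariant (repCx K ψ) M) (hψ : IsLocallyConstant ψ) (hψ1 : ψ ≠ 1)
    (hχ : SmoothMulChar χ) (hM : M ≤ Cb K)
    [FiniteDimensional ℂ (M ⧸ sCoinvKer (GRep.sub (repCx K ψ) hMi))] (hϖ : ‖(ϖ : K)‖ < 1) (v : M) :
    ∃ C r : ℝ, ∀ m : ℕ, ∀ x ∈ shell ϖ m, ‖twist hχ hM v x‖ ≤ C * r ^ m := by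
  refine exists_norm_le_mul_pow_of_mem_shell hϖ (LinearMap.charpoly_monic
    ((χ ϖ : ℂ) • piZeroT (GRep.sub (repCx K ψ) hMi) ϖ))
    ((aeval_smul_piZeroT_mkQ_eq_zero_iff hMi hψ hψ1 hχ hM _ ϖ v).1 ?_)
  rw [LinearMap.aeval_self_charpoly, LinearMap.zero_apply]

variable {K : Type*} [NontriviallyNormedField K] [ProperSpace K] [MeasurableSpace Kˣ]
  [BorelSpace Kˣ] (μ : Measure Kˣ) {ϖ : Kˣ}

lemma summable_integral_norm_shell [μ.IsMulLeftInvariant] [IsFiniteMeasureOnCompacts μ]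
    {g : LocallyConstant Kˣ ℂ} (hbot : ∀ᶠ n : ℤ in atBot, ∀ x ∈ shell ϖ n, g x = 0) {C r : ℝ}
    (hg : ∀ m : ℕ, ∀ x ∈ shell ϖ m, ‖g x‖ ≤ C * r ^ m) {t : ℂ} (ht : |r * ‖t‖| < 1) :
    Summable fun n : ℤ => (∫ x in shell ϖ n, ‖g x‖ ∂μ) * ‖t‖ ^ n := by
  refine Summable.of_nat_of_neg ?_ ?_
  · refine .of_norm_bounded ((summable_geometric_of_abs_lt_one ht).mul_left
      (C * μ.real (shell ϖ 0))) fun m => ?_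
    have hint : ‖∫ x in shell ϖ m, ‖g x‖ ∂μ‖ ≤ C * r ^ m * μ.real (shell ϖ 0) := by
      rw [measureReal_def, ← measure_shell μ ϖ m]
      exact norm_setIntegral_le_of_norm_le_const (isCompact_shell ϖ m).measure_lt_top
        fun x hx => by simpa using hg m x hx
    rw [zpow_natCast, norm_mul, norm_pow, norm_norm]
    calc _ ≤ C * r ^ m * μ.real (shell ϖ 0) * ‖t‖ ^ m := by gcongr
      _ = _ := by rw [mul_pow]; ring
  · refine .of_norm_bounded_eventually_nat summable_zero ?_
    filter_upwards [(tendsto_neg_atTop_atBot.comp tendsto_natCast_atTop_atTop).eventually hbot]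
      with m hm
    rw [setIntegral_eq_zero_of_forall_eq_zero fun x hx => by rw [hm x hx, norm_zero], zero_mul,
      norm_zero]

lemma integrable_mul_norm_cpow [μ.IsMulLeftInvariant] [IsFiniteMeasureOnCompacts μ]
    (hϖ : ∀ x : Kˣ, ∃ n : ℤ, ‖(x : K)‖ = ‖(ϖ : K)‖ ^ n)
    {g : LocallyConstant Kˣ ℂ} (hbot : ∀ᶠ n : ℤ in atBot, ∀ x ∈ shell ϖ n, g x = 0) {C r : ℝ}
    (hg : ∀ m : ℕ, ∀ x ∈ shell ϖ m, ‖g x‖ ≤ C * r ^ m) {s : ℂ}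
    (hs : |r * ‖(‖(ϖ : K)‖ : ℂ) ^ s‖| < 1) :
    Integrable (fun x : Kˣ => g x * (‖(x : K)‖ : ℂ) ^ s) μ := by
  have hshell (n : ℤ) : Set.EqOn (fun x : Kˣ => g x * ((‖(ϖ : K)‖ : ℂ) ^ s) ^ n)
      (fun x => g x * (‖(x : K)‖ : ℂ) ^ s) (shell ϖ n) := fun x hx => by
    simp only [norm_cpow_of_mem_shell hx]
  rw [← integrableOn_univ, ← iUnion_shell hϖ]
  refine integrableOn_iUnion_of_summable_integral_norm (fun n => ?_) ?_
  · exact IntegrableOn.congr_fun ((integrableOn_shell μ g ϖ n).mul_const _) (hshell n)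
      (measurableSet_shell ϖ n)
  · refine (summable_integral_norm_shell μ hbot hg hs).congr fun n => ?_
    rw [← integral_mul_const]
    refine setIntegral_congr_fun (measurableSet_shell ϖ n) fun x hx => ?_
    simp only [← hshell n hx, norm_mul, norm_zpow]

lemma hasSum_shellIntegral_mul_zpow [IsFiniteMeasureOnCompacts μ] (hϖ1 : ‖(ϖ : K)‖ < 1)
    (hϖ : ∀ x : Kˣ, ∃ n : ℤ, ‖(x : K)‖ = ‖(ϖ : K)‖ ^ n) {g : LocallyConstant Kˣ ℂ} {s : ℂ}
    (hg : Integrable (fun x : Kˣ => g x * (‖(x : K)‖ : ℂ) ^ s) μ) :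
    HasSum (fun n => shellIntegral μ ϖ g n * ((‖(ϖ : K)‖ : ℂ) ^ s) ^ n)
      (∫ x : Kˣ, g x * (‖(x : K)‖ : ℂ) ^ s ∂μ) := by
  have h := hasSum_integral_iUnion (measurableSet_shell ϖ) (pairwise_disjoint_shell hϖ1)
    hg.integrableOn
  rw [iUnion_shell hϖ, setIntegral_univ] at h
  refine h.congr_fun fun n => ?_
  rw [shellIntegral_apply, ← integral_mul_const]
  refine setIntegral_congr_fun (measurableSet_shell ϖ n) fun x hx => ?_
  simp only [norm_cpow_of_mem_shell hx]

variable [IsUltrametricDist K] {ψ : AddChar K ℂ} {M : Submodule ℂ (Kˣ → ℂ)} {χ : Kˣ →* ℂˣ}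
  (hMi : GRep.Invariant (repCx K ψ) M)

/-- The two-sided sequences vanishing eventually at `+∞`. -/
def eventuallyZero : Submodule ℂ (ℤ → ℂ) where
  carrier := {b | b =ᶠ[atTop] 0}
  zero_mem' := EventuallyEq.rfl
  add_mem' ha hb := by simpa using ha.add hb
  smul_mem' c b hb := by simpa using hb.const_smul c

variable [μ.IsMulLeftInvariant] [IsFiniteMeasureOnCompacts μ]

lemma aeval_shift_charpoly_twistOp_eventuallyEq_zero (hψ : IsLocallyConstant ψ) (hψ1 : ψ ≠ 1)
    (hχ : SmoothMulChar χ) (hM : M ≤ Cb K)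
    [FiniteDimensional ℂ (M ⧸ sCoinvKer (GRep.sub (repCx K ψ) hMi))] (hϖ : ‖(ϖ : K)‖ < 1) (v : M) :
    aeval shift (twistOp (piZeroT (GRep.sub (repCx K ψ) hMi)) χ ϖ).charpoly
      (shellIntegral μ ϖ (twist hχ hM v)) =ᶠ[atTop] 0 := by
  set p := (twistOp (piZeroT (GRep.sub (repCx K ψ) hMi)) χ ϖ).charpoly
  have hker : sCoinvKer (GRep.sub (repCx K ψ) hMi) ≤
      eventuallyZero.comap (shellIntegral μ ϖ ∘ₗ twist hχ hM) := fun w hw =>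
    shellIntegral_eventuallyEq_zero μ (eventually_atTop_forall_mem_shell hϖ
      ((eventuallyEq_zero_of_mem_sCoinvKer hMi hψ hw).mono fun x hx => by simp [hx]))
  have hshift (g : LocallyConstant Kˣ ℂ) :
      shellIntegral μ ϖ (translate ϖ g) = shift (shellIntegral μ ϖ g) :=
    funext fun n => shellIntegral_translate_apply μ g (by simpa using zpow_mem_shell 1) n
  have h := map_aeval_charpoly_twistOp_eq_zero _ χ ϖ
    (fun u hu x => smul_piZeroT_sub_one_apply_eq_zero hMi hψ hψ1 hχ hM hu)
    (Submodule.mapQ _ eventuallyZero _ hker) (fun u hu x => ?_) (Submodule.mkQ _ v)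
  · rw [← map_aeval_apply_of_intertwines (smul_piZeroT_mkQ hMi ϖ), Submodule.mkQ_apply,
      Submodule.mapQ_apply, LinearMap.comp_apply,
      map_aeval_apply_of_intertwines (twist_smul_sub_xT_apply hMi hχ hM ϖ),
      map_aeval_apply_of_intertwines hshift] at h
    exact (Submodule.Quotient.mk_eq_zero _).1 h
  · obtain ⟨w, rfl⟩ := Submodule.mkQ_surjective _ x
    have hu0 : u ∈ shell ϖ 0 := by simpa [mem_shell] using mem_unitSphere.1 hu
    rw [← smul_piZeroT_mkQ hMi u w, Submodule.mkQ_apply, Submodule.mapQ_apply,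
      Submodule.mkQ_apply, Submodule.mapQ_apply, LinearMap.comp_apply, LinearMap.comp_apply,
      twist_smul_sub_xT_apply hMi hχ hM]
    congr 1
    ext n
    rw [shellIntegral_translate_apply μ _ hu0, add_zero]

lemma finite_support_aeval_shift_charpoly_twistOp (hψ : IsLocallyConstant ψ) (hψ1 : ψ ≠ 1)
    (hχ : SmoothMulChar χ) (hM : M ≤ Cb K)
    [FiniteDimensional ℂ (M ⧸ sCoinvKer (GRep.sub (repCx K ψ) hMi))] (hϖ : ‖(ϖ : K)‖ < 1) (v : M) :
    (Function.support (aeval shift (twistOp (piZeroT (GRep.sub (repCx K ψ) hMi)) χ ϖ).charpoly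
      (shellIntegral μ ϖ (twist hχ hM v)))).Finite := by
  refine eventually_cofinite.1 ?_
  rw [Int.cofinite_eq, eventually_sup]
  refine ⟨aeval_shift_eventuallyEq_zero_atBot _ (shellIntegral_eventuallyEq_zero μ ?_),
    aeval_shift_charpoly_twistOp_eventuallyEq_zero μ hMi hψ hψ1 hχ hM hϖ v⟩
  exact eventually_atBot_forall_mem_shell_twist_eq_zero hχ hM hϖ v

end ZetaIntegral

section Statements

open Aff

variable {K : Type*} [NontriviallyNormedField K] [IsUltrametricDist K] [ProperSpace K]

theorem statement19_general
    (ψ : AddChar K ℂ) (hψlc : IsLocallyConstant (⇑ψ)) (hψne : ψ ≠ 1)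
    [MeasurableSpace Kˣ] [BorelSpace Kˣ]
    (μhaar : MeasureTheory.Measure Kˣ) [μhaar.IsHaarMeasure]
    (ϖ : Kˣ) (hϖlt : ‖(ϖ : K)‖ < 1)
    (hϖgen : ∀ x : Kˣ, ∃ n : ℤ, ‖(x : K)‖ = ‖(ϖ : K)‖ ^ n)
    (M : Submodule ℂ (Kˣ → ℂ)) (hMi : GRep.Invariant (repCx K ψ) M) (hMle : M ≤ Cb K)
    (c : CompSeries (GRep.sub (repCx K ψ) hMi))
    (χ : Kˣ →* ℂˣ) (hχ : SmoothMulChar χ) (f : Kˣ → ℂ) (hf : f ∈ M) :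
    ∃ s₀ : ℝ,
      (∀ s : ℂ, s₀ < s.re → MeasureTheory.Integrable
        (fun x : Kˣ => f x * (χ x : ℂ) * (‖(x : K)‖ : ℂ) ^ s) μhaar) ∧
      ∃ h : ℂ → ℂ, Differentiable ℂ h ∧
        ∀ s : ℂ, s₀ < s.re →
          (∫ x : Kˣ, f x * (χ x : ℂ) * (‖(x : K)‖ : ℂ) ^ s ∂μhaar)
            = h s * Lfactor (piZeroT (GRep.sub (repCx K ψ) hMi)) χ ϖ s := by
  have := c.finiteDimensional_piZeroT hMi hψlc hψne hMle hϖgen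
  set T := twistOp (piZeroT (GRep.sub (repCx K ψ) hMi)) χ ϖ
  set b := shellIntegral μhaar ϖ (twist hχ hMle ⟨f, hf⟩)
  have hϖ0 : (‖(ϖ : K)‖ : ℂ) ≠ 0 := by simp
  obtain ⟨C, r, hgrowth⟩ := exists_norm_twist_le_mul_pow hMi hψlc hψne hχ hMle hϖlt ⟨f, hf⟩
  obtain ⟨s₀, hs₀⟩ := exists_forall_re_gt_cpow (norm_pos_iff.2 ϖ.ne_zero) hϖlt
    (((eventually_abs_mul_norm_lt_one r).filter_mono nhdsWithin_le_nhds).and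
      (eventually_eval_inv_ne_zero T.charpoly_monic.ne_zero))
  have hint (s : ℂ) (hs : s₀ < s.re) := integrable_mul_norm_cpow μhaar hϖgen
    (eventually_atBot_forall_mem_shell_twist_eq_zero hχ hMle hϖlt ⟨f, hf⟩) hgrowth (hs₀ s hs).1
  have hfin := finite_support_aeval_shift_charpoly_twistOp μhaar hMi hψlc hψne hχ hMle hϖlt ⟨f, hf⟩
  refine ⟨s₀, hint, _, differentiable_cpow_mul_sum_zpow hϖ0
    (Module.finrank ℂ (unrPart (piZeroT (GRep.sub (repCx K ψ) hMi)) χ)) hfin.toFinset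
    (Polynomial.aeval shift T.charpoly b), fun s hs => ?_⟩
  have ht0 : (‖(ϖ : K)‖ : ℂ) ^ s ≠ 0 := by simp
  have hpoly := eval_inv_mul_eq_sum ht0
    (hasSum_shellIntegral_mul_zpow μhaar hϖlt hϖgen (hint s hs)) (p := T.charpoly)
    (S := hfin.toFinset) fun n hn => by simpa using hn
  rw [Lfactor, det_id_sub_smul _ ht0, ← hpoly, ← mul_assoc, mul_comm, inv_mul_cancel_left₀]
  · rfl
  · exact mul_ne_zero (pow_ne_zero _ ht0) (hs₀ s hs).2

theorem statement19
    (hchar : (2 : K) ≠ 0)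
    (ψ : AddChar K ℂ) (hψlc : IsLocallyConstant (⇑ψ)) (hψne : ψ ≠ 1)
    [MeasurableSpace Kˣ] [BorelSpace Kˣ]
    (μhaar : MeasureTheory.Measure Kˣ) [μhaar.IsHaarMeasure]
    (hnorm : μhaar {u : Kˣ | ‖(u : K)‖ = 1} = 1)
    (ϖ : Kˣ) (hϖlt : ‖(ϖ : K)‖ < 1)
    (hϖgen : ∀ x : Kˣ, ∃ n : ℤ, ‖(x : K)‖ = ‖(ϖ : K)‖ ^ n)
    (M : Submodule ℂ (Kˣ → ℂ)) (hMi : GRep.Invariant (repCx K ψ) M) (hMle : M ≤ Cb K)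
    (hMne : M ≠ ⊥) (c : CompSeries (GRep.sub (repCx K ψ) hMi))
    (χ : Kˣ →* ℂˣ) (hχ : SmoothMulChar χ) (f : Kˣ → ℂ) (hf : f ∈ M) :
    ∃ s₀ : ℝ,
      (∀ s : ℂ, s₀ < s.re → MeasureTheory.Integrable
        (fun x : Kˣ => f x * (χ x : ℂ) * (‖(x : K)‖ : ℂ) ^ s) μhaar) ∧
      ∃ h : ℂ → ℂ, Differentiable ℂ h ∧
        ∀ s : ℂ, s₀ < s.re →
          (∫ x : Kˣ, f x * (χ x : ℂ) * (‖(x : K)‖ : ℂ) ^ s ∂μhaar)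
            = h s * Lfactor (piZeroT (GRep.sub (repCx K ψ) hMi)) χ ϖ s :=
  statement19_general ψ hψlc hψne μhaar ϖ hϖlt hϖgen M hMi hMle c χ hχ f hf

end Statements

end PSW
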